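/- arXiv:1609.09526 — 4 statements merged into one kernel-verified Lean document; each statement's English description precedes it below -/
import Mathlib

section
/- Let P be a lattice polygon with i(P) ≥ 1. Then either (b(P), i(P)) = (9, 1) or b(P) ≤ 2·i(P) + 6. -/
open MeasureTheory

/-- The point of `ℝ²` corresponding to an integer point. -/
def toR2 (z : ℤ × ℤ) : ℝ × ℝ := ((z.1 : ℝ), (z.2 : ℝ))

/-- A lattice polygon: a two-dimensional convex hull of finitely many integer points. -/
def IsLatticePolygon (P : Set (ℝ × ℝ)) : Prop :=
  ∃ S : Finset (ℤ × ℤ), P = convexHull ℝ (toR2 '' (S : Set (ℤ × ℤ))) ∧ affineSpan ℝ P = ⊤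

/-- A lattice triangle: the convex hull of three affinely independent integer points. -/
def IsLatticeTriangle (T : Set (ℝ × ℝ)) : Prop :=
  ∃ v0 v1 v2 : ℤ × ℤ, AffineIndependent ℝ ![toR2 v0, toR2 v1, toR2 v2] ∧
    T = convexHull ℝ {toR2 v0, toR2 v1, toR2 v2}

/-- The number of lattice points on the boundary. -/
noncomputable def bcount (P : Set (ℝ × ℝ)) : ℕ :=
  Set.ncard {z : ℤ × ℤ | toR2 z ∈ frontier P}

/-- The number of lattice points in the interior. -/
noncomputable def icount (P : Set (ℝ × ℝ)) : ℕ :=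
  Set.ncard {z : ℤ × ℤ | toR2 z ∈ interior P}

/-- The Euclidean area. -/
noncomputable def area (P : Set (ℝ × ℝ)) : ℝ := (volume P).toReal

/-!
Let `P` have exactly `m` and `n` lattice points on its extreme horizontal lattice lines, at
distance `r`. Every line in between carries at most two boundary points, and its number of interior
points is bounded below by interpolating the two extreme widths; hence `b ≤ m + n + 2 (r - 1)` and
`(r - 1) (m + n - 4) ≤ 2 i`, which give `b ≤ 2 i + 6` as soon as `r ≥ 2` and `m + n ≥ 6`.

If `i = 1` and `b ≥ 9`, the parity pigeonhole on the boundary points yields an edge with a lattice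
point in its relative interior. Moving this edge to the line `y = 0` and counting row by row gives
`b ≤ 9`.

If `i ≥ 2`, an edge of the convex hull of the interior lattice points is moved to `y = 0`, so that
`(0, 0)` and `(1, 0)` are interior and no interior lattice point has positive height. Then `P` lies
below `y = 1`. When `m + n ≤ 5`, cut off the top: if the hull of the lattice points with `y ≤ 0`
still has interior lattice points, induct on it, since it has lost at least two; otherwise `r - 1`
of the interior points of `P` lie on a single segment, which bounds `b ≤ m + n + 2 (r - 1)`.
-/

open Bornology Topology

/-- The lattice points of a planar set; `bcount` and `icount` count those of the frontier and of
the interior. -/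
def latticePoints (X : Set (ℝ × ℝ)) : Set (ℤ × ℤ) := {z | toR2 z ∈ X}

/-- The abscissae of the lattice points of `X` of height `y`. -/
def latticeRow (X : Set (ℝ × ℝ)) (y : ℤ) : Set ℤ := {x | toR2 (x, y) ∈ X}

section Counting

variable {X : Set (ℝ × ℝ)}

lemma latticePoints_mono {Y : Set (ℝ × ℝ)} (h : X ⊆ Y) : latticePoints X ⊆ latticePoints Y :=
  fun _ hz => h hz

lemma isometry_toR2 : Isometry toR2 :=
  Isometry.of_dist_eq fun _ _ => by simp [toR2, Prod.dist_eq]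

lemma finite_latticePoints (hX : IsBounded X) : (latticePoints X).Finite :=
  (Metric.isCompact_of_isClosed_isBounded (isClosed_discrete _)
    (isometry_toR2.antilipschitz.isBounded_preimage hX)).finite_of_discrete

lemma finite_latticeRow (hX : IsBounded X) (y : ℤ) : (latticeRow X y).Finite :=
  Set.Finite.preimage (f := fun x => (x, y)) (Prod.mk_left_injective y).injOn
    (finite_latticePoints hX)

lemma ncard_latticePoints_eq_bcount_add_icount (hX : IsCompact X) :
    (latticePoints X).ncard = bcount X + icount X := by
  have hfrontier : {z | toR2 z ∈ frontier X} = latticePoints X \ latticePoints (interior X) := by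
    rw [hX.isClosed.frontier_eq]
    rfl
  rw [bcount, hfrontier]
  exact (Set.ncard_sdiff_add_ncard_of_subset (latticePoints_mono interior_subset)
    (finite_latticePoints hX.isBounded)).symm

lemma sum_ncard_latticeRow (hX : IsBounded X) (T : Finset ℤ) :
    ∑ y ∈ T, (latticeRow X y).ncard = (latticePoints X ∩ {z | z.2 ∈ T}).ncard := by
  have hfin := (finite_latticePoints hX).inter_of_left {z | z.2 ∈ T}
  rw [Set.ncard_eq_toFinset_card _ hfin,
    Finset.card_eq_sum_card_fiberwise (f := Prod.snd) (t := T) (by intro z hz; simp_all)]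
  refine Finset.sum_congr rfl fun y hy => ?_
  rw [← Set.ncard_image_of_injective _ (Prod.mk_left_injective y), ← Set.ncard_coe_finset]
  congr 1
  ext ⟨x, y'⟩
  simp only [Set.mem_image, latticeRow, latticePoints, Set.mem_ofPred_eq, Finset.coe_filter,
    Set.Finite.mem_toFinset, Set.mem_inter_iff, Prod.mk.injEq]
  grind

/-- The lattice points of `X` have heights in `[c, d]`, and both extreme rows are occupied. -/
structure IsRowRange (X : Set (ℝ × ℝ)) (c d : ℤ) : Prop where
  bot : (latticeRow X c).Nonempty
  top : (latticeRow X d).Nonempty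
  snd_mem_Icc : ∀ z ∈ latticePoints X, z.2 ∈ Finset.Icc c d

lemma exists_isRowRange (hX : IsBounded X) (hne : (latticePoints X).Nonempty) :
    ∃ c d, IsRowRange X c d := by
  obtain ⟨⟨a, c⟩, hac, hc⟩ :=
    Set.exists_min_image _ (fun z : ℤ × ℤ => z.2) (finite_latticePoints hX) hne
  obtain ⟨⟨b, d⟩, hbd, hd⟩ :=
    Set.exists_max_image _ (fun z : ℤ × ℤ => z.2) (finite_latticePoints hX) hne
  exact ⟨c, d, ⟨a, hac⟩, ⟨b, hbd⟩, fun z hz => Finset.mem_Icc.2 ⟨hc z hz, hd z hz⟩⟩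

lemma IsRowRange.ncard_latticePoints_eq_sum {c d : ℤ} (h : IsRowRange X c d) {Y : Set (ℝ × ℝ)}
    (hX : IsBounded X) (hYX : Y ⊆ X) :
    (latticePoints Y).ncard = ∑ y ∈ Finset.Icc c d, (latticeRow Y y).ncard := by
  rw [sum_ncard_latticeRow (hX.subset hYX), Set.inter_eq_left.2]
  exact fun z hz => h.snd_mem_Icc z (hYX hz)

lemma exists_ncard_le_sub_add_one {S : Set ℤ} (hS : S.Finite) (hne : S.Nonempty) :
    ∃ a ∈ S, ∃ b ∈ S, (S.ncard : ℤ) ≤ b - a + 1 := by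
  obtain ⟨a, ha, hmin⟩ := Set.exists_min_image S id hS hne
  obtain ⟨b, hb, hmax⟩ := Set.exists_max_image S id hS hne
  have hcard : S.ncard ≤ (Finset.Icc a b).card := by
    rw [← Set.ncard_coe_finset]
    exact Set.ncard_le_ncard fun x hx => Finset.mem_coe.2 (Finset.mem_Icc.2 ⟨hmin x hx, hmax x hx⟩)
  have hab : a ≤ b := hmin b hb
  rw [Int.card_Icc] at hcard
  exact ⟨a, ha, b, hb, by omega⟩

lemma ncard_le_two_of_forall_not_between {α : Type*} [LinearOrder α] {S : Set α} (hS : S.Finite)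
    (h : ∀ a ∈ S, ∀ x ∈ S, ∀ b ∈ S, a < x → ¬ x < b) : S.ncard ≤ 2 := by
  obtain rfl | hne := S.eq_empty_or_nonempty
  · simp
  obtain ⟨a, ha, hmin⟩ := Set.exists_min_image S id hS hne
  obtain ⟨b, hb, hmax⟩ := Set.exists_max_image S id hS hne
  have hsub : S ⊆ {a, b} := fun x hx => by
    by_contra! hxab
    simp only [Set.mem_insert_iff, Set.mem_singleton_iff, not_or] at hxab
    exact h a ha x hx b hb (lt_of_le_of_ne (hmin x hx) (Ne.symm hxab.1))
      (lt_of_le_of_ne (hmax x hx) hxab.2)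
  exact (Set.ncard_le_ncard hsub).trans ((Set.ncard_insert_le a {b}).trans (by simp))

end Counting

section Convex

variable {X : Set (ℝ × ℝ)} {y : ℝ}

lemma mk_mem_of_mem_Icc (hX : Convex ℝ X) {a b x : ℝ} (ha : (a, y) ∈ X) (hb : (b, y) ∈ X)
    (hx : x ∈ Set.Icc a b) : (x, y) ∈ X := by
  refine hX.segment_subset ha hb ?_
  rw [← Prod.image_mk_segment_left, segment_eq_Icc (hx.1.trans hx.2)]
  exact Set.mem_image_of_mem _ hx

lemma ordConnected_latticeRow (hX : Convex ℝ X) (y : ℤ) : (latticeRow X y).OrdConnected :=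
  ⟨fun _ ha _ hb _ hx => mk_mem_of_mem_Icc hX ha hb ⟨Int.cast_le.2 hx.1, Int.cast_le.2 hx.2⟩⟩

-- Near `(x, y)`, the points on the side of `u` lie in the triangle spanned by the chord and `u`.
lemma eventually_mem_of_chord (hX : Convex ℝ X) {x₁ x x₂ : ℝ} (h₁ : (x₁, y) ∈ X)
    (h₂ : (x₂, y) ∈ X) (hx : x ∈ Set.Ioo x₁ x₂) {u : ℝ × ℝ} (hu : u ∈ X) (huy : u.2 ≠ y) :
    ∀ᶠ q in 𝓝 (x, y), 0 ≤ (q.2 - y) / (u.2 - y) → q ∈ X := by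
  let t : ℝ × ℝ → ℝ := fun q => (q.2 - y) / (u.2 - y)
  let f : ℝ × ℝ → ℝ := fun q => (q.1 - t q * u.1) / (1 - t q)
  have ht : ContinuousAt t (x, y) := by fun_prop
  have ht0 : t (x, y) = 0 := by simp [t]
  have hf : ContinuousAt f (x, y) := by
    refine ContinuousAt.div (by fun_prop) (by fun_prop) ?_
    simp [ht0]
  have hf0 : f (x, y) = x := by simp [f, ht0]
  filter_upwards [ht.eventually_lt_const (ht0 ▸ zero_lt_one),
    hf.eventually_mem (isOpen_Ioo.mem_nhds (hf0.symm ▸ hx))] with q ht1 hfq htq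
  have hbase : (f q, y) ∈ X := mk_mem_of_mem_Icc hX h₁ h₂ (Set.Ioo_subset_Icc_self hfq)
  have hsub : 1 - t q ≠ 0 := by linarith
  have huy' : u.2 - y ≠ 0 := sub_ne_zero.2 huy
  have htq : 0 ≤ t q := htq
  convert hX hbase hu (sub_nonneg.2 ht1.le) htq (sub_add_cancel 1 (t q)) using 1
  ext
  · simp only [Prod.fst_add, Prod.smul_fst, smul_eq_mul, f]
    field_simp
    ring
  · simp only [Prod.snd_add, Prod.smul_snd, smul_eq_mul, t]
    field_simp
    ring

lemma mk_mem_interior_of_chord (hX : Convex ℝ X) {x₁ x x₂ : ℝ} (h₁ : (x₁, y) ∈ X)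
    (h₂ : (x₂, y) ∈ X) (hx : x ∈ Set.Ioo x₁ x₂) {u d : ℝ × ℝ} (hu : u ∈ X) (hd : d ∈ X)
    (hyu : y < u.2) (hdy : d.2 < y) : (x, y) ∈ interior X := by
  refine mem_interior_iff_mem_nhds.2 ?_
  filter_upwards [eventually_mem_of_chord hX h₁ h₂ hx hu hyu.ne',
    eventually_mem_of_chord hX h₁ h₂ hx hd hdy.ne] with q hqu hqd
  obtain hq | hq := le_total y q.2
  · exact hqu (div_nonneg (sub_nonneg.2 hq) (sub_pos.2 hyu).le)
  · exact hqd (div_nonneg_of_nonpos (sub_nonpos.2 hq) (sub_neg.2 hdy).le)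

end Convex

section Rows

variable {X : Set (ℝ × ℝ)}

lemma sub_sub_one_le_ncard_latticeRow_interior (hX : Convex ℝ X) (hb : IsBounded X) {y : ℤ}
    {α β : ℝ} (hα : (α, (y : ℝ)) ∈ X) (hβ : (β, (y : ℝ)) ∈ X) {u d : ℝ × ℝ} (hu : u ∈ X)
    (hd : d ∈ X) (hyu : y < u.2) (hdy : d.2 < y) :
    β - α - 1 ≤ (latticeRow (interior X) y).ncard := by
  have hsub : (Finset.Ioo ⌊α⌋ ⌈β⌉ : Set ℤ) ⊆ latticeRow (interior X) y := fun k hk => by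
    obtain ⟨hαk, hkβ⟩ := Finset.mem_Ioo.1 (Finset.mem_coe.1 hk)
    exact mk_mem_interior_of_chord hX hα hβ ⟨Int.floor_lt.1 hαk, Int.lt_ceil.1 hkβ⟩ hu hd hyu hdy
  have hcard := Set.ncard_le_ncard hsub (finite_latticeRow (hb.subset interior_subset) y)
  rw [Set.ncard_coe_finset, Int.card_Ioo] at hcard
  have hle : ⌈β⌉ - ⌊α⌋ - 1 ≤ ((latticeRow (interior X) y).ncard : ℤ) := by omega
  have hleR : (⌈β⌉ : ℝ) - ⌊α⌋ - 1 ≤ (latticeRow (interior X) y).ncard := by exact_mod_cast hle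
  linarith [Int.floor_le α, Int.le_ceil β]

-- The chord of height `y` contains the convex combination of two segments in the rows `c`, `d`.
lemma row_width_le (hX : Convex ℝ X) (hb : IsBounded X) {c y d a₁ a₂ b₁ b₂ : ℤ}
    (hcy : c < y) (hyd : y < d) (ha₁ : a₁ ∈ latticeRow X c) (ha₂ : a₂ ∈ latticeRow X c)
    (hb₁ : b₁ ∈ latticeRow X d) (hb₂ : b₂ ∈ latticeRow X d) :
    (d - y) * (a₂ - a₁) + (y - c) * (b₂ - b₁) ≤
      (d - c) * ((latticeRow (interior X) y).ncard + 1) := by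
  have hcyR : (c : ℝ) < y := Int.cast_lt.2 hcy
  have hydR : (y : ℝ) < d := Int.cast_lt.2 hyd
  have hdc : (0 : ℝ) < d - c := by linarith
  have hchord {a b : ℤ} (ha : a ∈ latticeRow X c) (hb : b ∈ latticeRow X d) :
      (((d - y) * a + (y - c) * b : ℝ) / (d - c), (y : ℝ)) ∈ X := by
    convert hX ha hb (a := (d - y) / (d - c)) (b := (y - c) / (d - c))
      (div_nonneg (sub_nonneg.2 hydR.le) hdc.le) (div_nonneg (sub_nonneg.2 hcyR.le) hdc.le)
      (by field_simp; ring) using 1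
    ext <;> simp only [toR2, Prod.fst_add, Prod.snd_add, Prod.smul_fst, Prod.smul_snd, smul_eq_mul]
    · field_simp
    · field_simp
      ring
  have hwidth := sub_sub_one_le_ncard_latticeRow_interior hX hb (hchord ha₁ hb₁) (hchord ha₂ hb₂)
    hb₁ ha₁ hydR hcyR
  rw [← sub_div, sub_le_iff_le_add, div_le_iff₀ hdc] at hwidth
  have hcast : (d - y : ℝ) * (a₂ - a₁) + (y - c) * (b₂ - b₁) ≤
      (d - c) * ((latticeRow (interior X) y).ncard + 1) := by linarith
  exact_mod_cast hcast

lemma row_ncard_le (hX : Convex ℝ X) (hb : IsBounded X) {c y d : ℤ} (hcy : c < y) (hyd : y < d)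
    (hc : (latticeRow X c).Nonempty) (hd : (latticeRow X d).Nonempty) :
    (d - y) * ((latticeRow X c).ncard - 1) + (y - c) * ((latticeRow X d).ncard - 1) ≤
      (d - c) * ((latticeRow (interior X) y).ncard + 1 : ℤ) := by
  obtain ⟨a₁, ha₁, a₂, ha₂, ha⟩ := exists_ncard_le_sub_add_one (finite_latticeRow hb c) hc
  obtain ⟨b₁, hb₁, b₂, hb₂, hb'⟩ := exists_ncard_le_sub_add_one (finite_latticeRow hb d) hd
  have hwidth := row_width_le hX hb hcy hyd ha₁ ha₂ hb₁ hb₂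
  have hleft := mul_le_mul_of_nonneg_left (sub_le_iff_le_add.2 ha) (sub_pos.2 hyd).le
  have hright := mul_le_mul_of_nonneg_left (sub_le_iff_le_add.2 hb') (sub_pos.2 hcy).le
  linarith

lemma ncard_latticeRow_frontier_le_two (hX : Convex ℝ X) (hc : IsCompact X) {y : ℤ}
    {u d : ℝ × ℝ} (hu : u ∈ X) (hd : d ∈ X) (hyu : y < u.2) (hdy : d.2 < y) :
    (latticeRow (frontier X) y).ncard ≤ 2 := by
  have hsub : frontier X ⊆ X := hc.isClosed.frontier_subset
  refine ncard_le_two_of_forall_not_between (finite_latticeRow (hc.isBounded.subset hsub) y)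
    fun a ha x hx b hb hax hxb => hx.2 ?_
  exact mk_mem_interior_of_chord hX (hsub ha) (hsub hb) ⟨Int.cast_lt.2 hax, Int.cast_lt.2 hxb⟩
    hu hd hyu hdy

end Rows

section Scott

variable {X : Set (ℝ × ℝ)} {c d : ℤ}

lemma IsRowRange.bcount_le (h : IsRowRange X c d) (hX : Convex ℝ X) (hK : IsCompact X)
    (hcd : c < d) :
    (bcount X : ℤ) ≤ (latticeRow X c).ncard + (latticeRow X d).ncard + 2 * (d - c - 1) := by
  have hsub : frontier X ⊆ X := hK.isClosed.frontier_subset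
  obtain ⟨a, ha⟩ := h.bot
  obtain ⟨b, hb⟩ := h.top
  have hmid : ∑ y ∈ Finset.Ioo c d, (latticeRow (frontier X) y).ncard
      ≤ (Finset.Ioo c d).card • 2 := Finset.sum_le_card_nsmul _ _ _ fun y hy => by
    obtain ⟨hcy, hyd⟩ := Finset.mem_Ioo.1 hy
    exact ncard_latticeRow_frontier_le_two hX hK hb ha (Int.cast_lt.2 hyd) (Int.cast_lt.2 hcy)
  have hrow (y : ℤ) : (latticeRow (frontier X) y).ncard ≤ (latticeRow X y).ncard :=
    Set.ncard_le_ncard (fun _ hx => hsub hx) (finite_latticeRow hK.isBounded y)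
  have hsum : bcount X = _ := h.ncard_latticePoints_eq_sum hK.isBounded hsub
  rw [← Finset.Ioc_insert_left hcd.le, Finset.sum_insert (by simp), ← Finset.Ioo_insert_right hcd,
    Finset.sum_insert (by simp)] at hsum
  rw [Int.card_Ioo, smul_eq_mul] at hmid
  have := hrow c
  have := hrow d
  omega

lemma IsRowRange.sum_ncard_le_icount (h : IsRowRange X c d) (hb : IsBounded X) :
    ∑ y ∈ Finset.Ioo c d, (latticeRow (interior X) y).ncard ≤ icount X :=
  (Finset.sum_le_sum_of_subset Finset.Ioo_subset_Icc_self).trans_eq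
    (h.ncard_latticePoints_eq_sum hb interior_subset).symm

-- The rows at heights `y` and `c + d - y` are estimated together.
lemma IsRowRange.mul_le_two_mul_icount (h : IsRowRange X c d) (hX : Convex ℝ X)
    (hb : IsBounded X) (hcd : c < d) :
    (d - c - 1) * ((latticeRow X c).ncard + (latticeRow X d).ncard - 4) ≤ 2 * (icount X : ℤ) := by
  set m : ℤ := ((latticeRow X c).ncard : ℤ)
  set n : ℤ := ((latticeRow X d).ncard : ℤ)
  let f : ℤ → ℤ := fun y => ((latticeRow (interior X) y).ncard : ℤ)
  have hreflect : ∑ y ∈ Finset.Ioo c d, f (c + d - y) = ∑ y ∈ Finset.Ioo c d, f y :=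
    Finset.sum_equiv (Equiv.subLeft (c + d))
      (by simp only [Finset.mem_Ioo, Equiv.subLeft_apply]; omega) (fun _ _ => rfl)
  have hpair : ∀ y ∈ Finset.Ioo c d, m + n - 4 ≤ f y + f (c + d - y) := fun y hy => by
    obtain ⟨hcy, hyd⟩ := Finset.mem_Ioo.1 hy
    have hrow := row_ncard_le hX hb hcy hyd h.bot h.top
    have hrow' := row_ncard_le hX hb (y := c + d - y) (by omega) (by omega) h.bot h.top
    refine le_of_mul_le_mul_left ?_ (sub_pos.2 hcd)
    linarith
  have hsum := Finset.card_nsmul_le_sum _ _ _ hpair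
  rw [Finset.sum_add_distrib, hreflect, Int.card_Ioo, nsmul_eq_mul,
    Int.toNat_of_nonneg (by omega)] at hsum
  have hle : ∑ y ∈ Finset.Ioo c d, f y ≤ icount X := by
    simp only [f]
    exact_mod_cast h.sum_ncard_le_icount hb
  linarith

lemma IsRowRange.bcount_le_two_mul_icount_add_six (h : IsRowRange X c d) (hX : Convex ℝ X)
    (hK : IsCompact X) (hcd : 2 ≤ d - c)
    (hrows : 6 ≤ (latticeRow X c).ncard + (latticeRow X d).ncard) :
    bcount X ≤ 2 * icount X + 6 := by
  have hb := h.bcount_le hX hK (by omega)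
  have hi := h.mul_le_two_mul_icount hX hK.isBounded (by omega)
  zify at hrows ⊢
  nlinarith

end Scott

section Unimodular

/-- The linear automorphism of the plane with matrix `!![u, v; -b, a]`, of determinant one; it
sends `(a, b)` to `(1, 0)`. -/
def bezoutEquiv {R : Type*} [CommRing R] (u v a b : R) (h : u * a + v * b = 1) :
    (R × R) ≃ₗ[R] (R × R) where
  toFun p := (u * p.1 + v * p.2, a * p.2 - b * p.1)
  invFun q := (a * q.1 - v * q.2, b * q.1 + u * q.2)
  map_add' p q := by ext <;> simp only [Prod.fst_add, Prod.snd_add] <;> ring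
  map_smul' r p := by
    ext <;> simp only [Prod.smul_fst, Prod.smul_snd, smul_eq_mul, RingHom.id_apply] <;> ring
  left_inv p := Prod.ext (by linear_combination p.1 * h) (by linear_combination p.2 * h)
  right_inv q := Prod.ext (by linear_combination q.1 * h) (by linear_combination q.2 * h)

/-- An affine automorphism of the plane that restricts to an automorphism of the integer lattice. -/
structure UnimodularEquiv where
  toReal : (ℝ × ℝ) ≃ᵃ[ℝ] (ℝ × ℝ)
  toInt : (ℤ × ℤ) ≃ᵃ[ℤ] (ℤ × ℤ)
  toReal_toR2 : ∀ z, toReal (toR2 z) = toR2 (toInt z)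

namespace UnimodularEquiv

/-- The point reflection at the origin. -/
def neg : UnimodularEquiv where
  toReal := (LinearEquiv.neg ℝ).toAffineEquiv
  toInt := (LinearEquiv.neg ℤ).toAffineEquiv
  toReal_toR2 z := by simp [toR2]

lemma exists_map_eq {p q : ℤ × ℤ} (hpq : p ≠ q) :
    ∃ (φ : UnimodularEquiv) (g : ℤ), 0 < g ∧ φ.toInt p = 0 ∧ φ.toInt q = (g, 0) ∧
      ∀ z, g * (φ.toInt z).2 = (q.1 - p.1) * (z.2 - p.2) - (q.2 - p.2) * (z.1 - p.1) := by
  have hgcd : 0 < Int.gcd (q.1 - p.1) (q.2 - p.2) := by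
    rw [Int.gcd_pos_iff, sub_ne_zero, sub_ne_zero]
    by_contra! h
    exact hpq (Prod.ext h.1.symm h.2.symm)
  obtain ⟨g, a, b, hg, hab, ha, hb⟩ := Int.exists_gcd_one' hgcd
  obtain ⟨u, v, huv⟩ := Int.isCoprime_iff_gcd_eq_one.2 hab
  have huvR : (u * a + v * b : ℝ) = 1 := mod_cast huv
  let φ : UnimodularEquiv :=
    { toReal := (AffineEquiv.constVAdd ℝ (ℝ × ℝ) (-toR2 p)).trans
        (bezoutEquiv (u : ℝ) v a b huvR).toAffineEquiv
      toInt := (AffineEquiv.constVAdd ℤ (ℤ × ℤ) (-p)).trans (bezoutEquiv u v a b huv).toAffineEquiv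
      toReal_toR2 := fun z => by simp [toR2, bezoutEquiv] }
  have hφ (z : ℤ × ℤ) : φ.toInt z =
      (u * (-p.1 + z.1) + v * (-p.2 + z.2), a * (-p.2 + z.2) - b * (-p.1 + z.1)) := rfl
  refine ⟨φ, g, Nat.cast_pos.2 hg, ?_, ?_, fun z => ?_⟩
  · simp [hφ]
  · rw [hφ, neg_add_eq_sub, neg_add_eq_sub, ha, hb]
    ext
    · linear_combination (g : ℤ) * huv
    · ring
  · rw [hφ, ha, hb]
    ring

variable (φ : UnimodularEquiv) (X : Set (ℝ × ℝ))

lemma mem_latticePoints_image {z : ℤ × ℤ} :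
    φ.toInt z ∈ latticePoints (φ.toReal '' X) ↔ z ∈ latticePoints X := by
  simp only [latticePoints, Set.mem_ofPred_eq, ← φ.toReal_toR2]
  exact φ.toReal.injective.mem_set_image

lemma latticePoints_image : latticePoints (φ.toReal '' X) = φ.toInt '' latticePoints X := by
  ext w
  obtain ⟨z, rfl⟩ := φ.toInt.surjective w
  rw [φ.mem_latticePoints_image, φ.toInt.injective.mem_set_image]

lemma interior_image : interior (φ.toReal '' X) = φ.toReal '' interior X :=
  (φ.toReal.toContinuousAffineEquiv.toHomeomorph.image_interior X).symm

lemma frontier_image : frontier (φ.toReal '' X) = φ.toReal '' frontier X :=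
  (φ.toReal.toContinuousAffineEquiv.toHomeomorph.image_frontier X).symm

lemma ncard_latticePoints_image :
    (latticePoints (φ.toReal '' X)).ncard = (latticePoints X).ncard := by
  rw [latticePoints_image, Set.ncard_image_of_injective _ φ.toInt.injective]

lemma icount_image : icount (φ.toReal '' X) = icount X := by
  unfold icount
  rw [interior_image]
  exact φ.ncard_latticePoints_image _

lemma bcount_image : bcount (φ.toReal '' X) = bcount X := by
  unfold bcount
  rw [frontier_image]
  exact φ.ncard_latticePoints_image _

lemma isLatticePolygon_image {P : Set (ℝ × ℝ)} (hP : IsLatticePolygon P) :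
    IsLatticePolygon (φ.toReal '' P) := by
  obtain ⟨S, rfl, hspan⟩ := hP
  refine ⟨S.map φ.toInt.toEquiv.toEmbedding, ?_, (φ.toReal.span_eq_top_iff).1 hspan⟩
  rw [← AffineEquiv.coe_toAffineMap, AffineMap.image_convexHull, Set.image_image, Finset.coe_map,
    Set.image_image]
  exact congrArg _ (Set.image_congr fun z _ => φ.toReal_toR2 z)

end UnimodularEquiv

end Unimodular

section LatticePolygon

variable {P : Set (ℝ × ℝ)}

lemma IsLatticePolygon.convex (hP : IsLatticePolygon P) : Convex ℝ P := by
  obtain ⟨S, rfl, -⟩ := hP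
  exact convex_convexHull ℝ _

lemma IsLatticePolygon.isCompact (hP : IsLatticePolygon P) : IsCompact P := by
  obtain ⟨S, rfl, -⟩ := hP
  exact (S.finite_toSet.image toR2).isCompact_convexHull ℝ

lemma snd_mem_interior_of_convexHull {I : Set (ℤ × ℤ)} {T : Set ℝ} (hT : Convex ℝ T)
    (h : ∀ z ∈ I, (z.2 : ℝ) ∈ T) {p : ℝ × ℝ} (hp : p ∈ interior (convexHull ℝ (toR2 '' I))) :
    p.2 ∈ interior T := by
  have hsub : convexHull ℝ (toR2 '' I) ⊆ Prod.snd ⁻¹' T :=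
    convexHull_min (Set.image_subset_iff.2 h) (hT.linear_preimage (LinearMap.snd ℝ ℝ ℝ))
  have hp' := interior_mono hsub hp
  rwa [← isOpenMap_snd.preimage_interior_eq_interior_preimage continuous_snd] at hp'

lemma IsLatticePolygon.snd_mem_interior (hP : IsLatticePolygon P) {T : Set ℝ} (hT : Convex ℝ T)
    (h : ∀ z ∈ latticePoints P, (z.2 : ℝ) ∈ T) {p : ℝ × ℝ} (hp : p ∈ interior P) :
    p.2 ∈ interior T := by
  obtain ⟨S, rfl, -⟩ := hP
  exact snd_mem_interior_of_convexHull hT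
    (fun z hz => h z (subset_convexHull ℝ _ (Set.mem_image_of_mem toR2 hz))) hp

lemma IsRowRange.snd_mem_Ioo {c d : ℤ} (h : IsRowRange P c d) (hP : IsLatticePolygon P)
    {z : ℤ × ℤ} (hz : z ∈ latticePoints (interior P)) : z.2 ∈ Set.Ioo c d := by
  have hIcc : ∀ w ∈ latticePoints P, (w.2 : ℝ) ∈ Set.Icc (c : ℝ) d := fun w hw =>
    (Finset.mem_Icc.1 (h.snd_mem_Icc w hw)).imp Int.cast_le.2 Int.cast_le.2
  have hmem := hP.snd_mem_interior (convex_Icc _ _) hIcc hz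
  rw [interior_Icc] at hmem
  exact ⟨Int.cast_lt.1 hmem.1, Int.cast_lt.1 hmem.2⟩

end LatticePolygon

section Edge

-- The edge starts at the lexicographic minimum `a` of `I` and has the largest slope.
lemma exists_unimodularEquiv_of_nontrivial {I : Set (ℤ × ℤ)} (hI : I.Finite)
    (hne : I.Nontrivial) : ∃ φ : UnimodularEquiv, ∃ g : ℤ, 0 < g ∧ 0 ∈ φ.toInt '' I ∧
      (g, 0) ∈ φ.toInt '' I ∧ ∀ z ∈ I, (φ.toInt z).2 ≤ 0 := by
  obtain ⟨a, ha, hmin⟩ := Set.exists_min_image I toLex hI hne.nonempty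
  suffices ∃ b ∈ I, b ≠ a ∧
      ∀ z ∈ I, (b.1 - a.1) * (z.2 - a.2) ≤ (b.2 - a.2) * (z.1 - a.1) by
    obtain ⟨b, hb, hba, hcross⟩ := this
    obtain ⟨φ, g, hg, hφa, hφb, hφ⟩ := UnimodularEquiv.exists_map_eq hba.symm
    refine ⟨φ, g, hg, ⟨a, ha, hφa⟩, ⟨b, hb, hφb⟩, fun z hz => ?_⟩
    refine nonpos_of_mul_nonpos_right ?_ hg
    rw [hφ]
    exact sub_nonpos.2 (hcross z hz)
  have hlex (z : ℤ × ℤ) (hz : z ∈ I) : a.1 < z.1 ∨ a.1 = z.1 ∧ a.2 ≤ z.2 :=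
    Prod.Lex.toLex_le_toLex.1 (hmin z hz)
  by_cases hvert : ∃ b ∈ I, b ≠ a ∧ b.1 = a.1
  · obtain ⟨b, hb, hba, hb1⟩ := hvert
    have hb2 : a.2 ≤ b.2 := by grind
    refine ⟨b, hb, hba, fun z hz => ?_⟩
    have hz1 : a.1 ≤ z.1 := by grind
    rw [hb1, sub_self, zero_mul]
    exact mul_nonneg (sub_nonneg.2 hb2) (sub_nonneg.2 hz1)
  · have hright (z : ℤ × ℤ) (hz : z ∈ I) (hza : z ≠ a) : (0 : ℚ) < z.1 - a.1 := by
      rw [sub_pos, Int.cast_lt]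
      grind
    obtain ⟨b, ⟨hb, hba⟩, hslope⟩ := Set.exists_max_image (I \ {a})
      (fun z => ((z.2 - a.2 : ℚ) / (z.1 - a.1))) hI.sdiff (hne.exists_ne a)
    refine ⟨b, hb, hba, fun z hz => ?_⟩
    obtain rfl | hza := eq_or_ne z a
    · simp
    have hle := (div_le_div_iff₀ (hright z hz hza) (hright b hb hba)).1 (hslope z ⟨hz, hza⟩)
    have hleZ : (z.2 - a.2) * (b.1 - a.1) ≤ (b.2 - a.2) * (z.1 - a.1) := by exact_mod_cast hle
    linarith

end Edge

section AdjacentRow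

variable {X : Set (ℝ × ℝ)}

lemma exists_mul_mem_Icc (x : ℤ) {h : ℤ} (hh : 0 < h) : ∃ m, h * m ∈ Set.Icc x (x + h - 1) :=
  ⟨-(-x / h), by
    have := Int.mul_ediv_self_le (x := -x) hh.ne'
    have := Int.lt_mul_ediv_self_add (x := -x) hh
    constructor <;> linarith⟩

-- `m` is chosen so that the line through `(x, k)` and `(m, ±1)` meets `[0, 1] × {0}`.
lemma exists_mem_openSegment (x : ℤ) {k : ℤ} (hk : 2 ≤ |k|) : ∃ m : ℤ, ∃ s ∈ Set.Icc (0 : ℝ) 1,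
    toR2 (m, k.sign) ∈ openSegment ℝ (s, 0) (toR2 (x, k)) := by
  obtain ⟨m, hm, hm'⟩ := exists_mul_mem_Icc x (by linarith : 0 < |k|)
  have hkR : (2 : ℝ) ≤ |k| := by exact_mod_cast hk
  have hmR : (x : ℝ) ≤ |k| * m := by exact_mod_cast hm
  have hmR' : |k| * m ≤ (x + |k| - 1 : ℝ) := by exact_mod_cast hm'
  have hsign : (k.sign : ℝ) * |k| = k := by exact_mod_cast Int.sign_mul_abs k
  have h0 : (0 : ℝ) < |k| := by linarith
  have h1 : (0 : ℝ) < |k| - 1 := by linarith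
  refine ⟨m, (|k| * m - x) / (|k| - 1), ⟨div_nonneg (by linarith) h1.le,
    (div_le_one h1).2 (by linarith)⟩, (|k| - 1) / |k|, 1 / |k|, div_pos h1 h0,
    one_div_pos.2 h0, by field_simp; ring, ?_⟩
  ext <;> simp only [toR2, Prod.fst_add, Prod.snd_add, Prod.smul_fst, Prod.smul_snd, smul_eq_mul]
  · field_simp
    ring
  · field_simp
    linarith

lemma mk_mem_of_row_zero (hX : Convex ℝ X) (h0 : 0 ∈ latticeRow X 0) (h1 : 1 ∈ latticeRow X 0)
    {s : ℝ} (hs : s ∈ Set.Icc (0 : ℝ) 1) : (s, (0 : ℝ)) ∈ X := by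
  simp only [latticeRow, toR2, Set.mem_ofPred_eq, Int.cast_zero, Int.cast_one] at h0 h1
  exact mk_mem_of_mem_Icc hX h0 h1 hs

lemma exists_latticeRow_sign_of_mem_interior (hX : Convex ℝ X) (h0 : 0 ∈ latticeRow X 0)
    (h1 : 1 ∈ latticeRow X 0) {z : ℤ × ℤ} (hz : z ∈ latticePoints (interior X)) (hz2 : z.2 ≠ 0) :
    (latticeRow (interior X) z.2.sign).Nonempty := by
  obtain hz1 | hz2 : |z.2| = 1 ∨ 2 ≤ |z.2| := by
    have := abs_pos.2 hz2
    omega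
  · refine ⟨z.1, ?_⟩
    rwa [show z.2.sign = z.2 by rw [← Int.sign_mul_abs z.2, hz1]; simp]
  · obtain ⟨m, s, hs, hm⟩ := exists_mem_openSegment z.1 hz2
    exact ⟨m, hX.openSegment_self_interior_subset_interior (mk_mem_of_row_zero hX h0 h1 hs) hz hm⟩

lemma exists_latticeRow_sign_of_mem (hX : Convex ℝ X) (h0 : 0 ∈ latticeRow (interior X) 0)
    (h1 : 1 ∈ latticeRow (interior X) 0) {z : ℤ × ℤ} (hz : z ∈ latticePoints X)
    (hz2 : 2 ≤ |z.2|) : (latticeRow (interior X) z.2.sign).Nonempty := by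
  obtain ⟨m, s, hs, hm⟩ := exists_mem_openSegment z.1 hz2
  exact ⟨m, hX.openSegment_interior_self_subset_interior
    (mk_mem_of_row_zero hX.interior h0 h1 hs) hz hm⟩

end AdjacentRow

section OneInteriorPoint

variable {P : Set (ℝ × ℝ)}

lemma exists_add_eq_add_self {z w : ℤ × ℤ}
    (h : ((z.1 : ZMod 2), (z.2 : ZMod 2)) = ((w.1 : ZMod 2), (w.2 : ZMod 2))) :
    ∃ m : ℤ × ℤ, z + w = m + m := by
  obtain ⟨h1, h2⟩ := Prod.ext_iff.1 h
  obtain ⟨k, hk⟩ := (ZMod.intCast_eq_intCast_iff_dvd_sub _ _ 2).1 h1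
  obtain ⟨l, hl⟩ := (ZMod.intCast_eq_intCast_iff_dvd_sub _ _ 2).1 h2
  refine ⟨(z.1 + k, z.2 + l), Prod.ext ?_ ?_⟩
  · simp only [Prod.fst_add]
    omega
  · simp only [Prod.snd_add]
    omega

-- Three boundary points agree modulo two, and two of their midpoints are distinct.
lemma exists_midpoint_notMem_interior (hP : IsLatticePolygon P) (hi : icount P = 1)
    (hb : 9 ≤ bcount P) : ∃ z ∈ latticePoints P, ∃ w ∈ latticePoints P, ∃ m, z ≠ w ∧
      z + w = m + m ∧ m ∉ latticePoints (interior P) := by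
  have hsub : frontier P ⊆ P := hP.isCompact.isClosed.frontier_subset
  have hfin := finite_latticePoints (hP.isCompact.isBounded.subset hsub)
  have hcard : hfin.toFinset.card = bcount P := (Set.ncard_eq_toFinset_card _ hfin).symm
  obtain ⟨r, -, hr⟩ := Finset.exists_lt_card_fiber_of_mul_lt_card_of_maps_to
    (f := fun z : ℤ × ℤ => ((z.1 : ZMod 2), (z.2 : ZMod 2))) (t := Finset.univ) (n := 2)
    (s := hfin.toFinset) (fun _ _ => Finset.mem_univ _)
    (by rw [hcard, Finset.card_univ, Fintype.card_prod, ZMod.card]; omega)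
  obtain ⟨a, ha, b, hb, c, hc, hab, hac, hbc⟩ := Finset.two_lt_card.1 hr
  simp only [Finset.mem_filter, Set.Finite.mem_toFinset] at ha hb hc
  obtain ⟨m, hm⟩ := exists_add_eq_add_self (ha.2.trans hb.2.symm)
  obtain ⟨m', hm'⟩ := exists_add_eq_add_self (ha.2.trans hc.2.symm)
  by_cases hmi : m ∈ latticePoints (interior P)
  · refine ⟨a, hsub ha.1, c, hsub hc.1, m', hac, hm', fun hmi' => hbc ?_⟩
    obtain ⟨o, ho⟩ : ∃ o, latticePoints (interior P) = {o} := Set.ncard_eq_one.1 hi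
    rw [ho, Set.mem_singleton_iff] at hmi hmi'
    exact add_left_cancel (hm.trans (by rw [hmi, ← hmi', hm']))
  · exact ⟨a, hsub ha.1, b, hsub hb.1, m, hab, hm, hmi⟩

lemma UnimodularEquiv.toInt_eq_neg (φ : UnimodularEquiv) {z w m : ℤ × ℤ} (hm : z + w = m + m)
    (hφm : φ.toInt m = 0) : φ.toInt w = -φ.toInt z := by
  have hlin (p q : ℤ × ℤ) : φ.toInt.linear (p - q) = φ.toInt p - φ.toInt q :=
    φ.toInt.toAffineMap.linearMap_vsub p q
  have hsub : w - m = m - z := by rw [sub_eq_sub_iff_add_eq_add, add_comm, hm]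
  rw [← sub_zero (φ.toInt w), ← zero_sub, ← hφm, ← hlin, ← hlin, hsub]

lemma IsRowRange.eq_zero_of_nonpos {c d : ℤ} (h : IsRowRange P c d)
    (h0 : (latticeRow P 0).Nonempty) (hle : ∀ z ∈ latticePoints P, z.2 ≤ 0) : d = 0 := by
  obtain ⟨x, hx⟩ := h0
  obtain ⟨x', hx'⟩ := h.top
  exact le_antisymm (hle (x', d) hx') (Finset.mem_Icc.1 (h.snd_mem_Icc (x, 0) hx)).2

lemma IsRowRange.bcount_le_nine_of_row_neg_two {c : ℤ} (h : IsRowRange P c 0) (hX : Convex ℝ P)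
    (hK : IsCompact P) (hc : c ≤ -4) (h0 : 3 ≤ (latticeRow P 0).ncard)
    (h2 : (latticeRow (interior P) (-2)).ncard = 0) : bcount P ≤ 9 := by
  have hb := hK.isBounded
  have hsub : frontier P ⊆ P := hK.isClosed.frontier_subset
  obtain ⟨p, hp⟩ := h.bot
  obtain ⟨q, hq⟩ := h.top
  have hwidth := row_ncard_le hX hb (by omega : c < -2) (by norm_num) h.bot h.top
  have hcpos := (Set.ncard_pos (finite_latticeRow hb c)).2 h.bot
  rw [h2, Nat.cast_zero] at hwidth
  have hc' : -4 ≤ c := by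
    zify at hcpos h0
    nlinarith
  obtain rfl := le_antisymm hc hc'
  have hwidth3 : (latticeRow P (-3)).ncard ≤ 1 := by
    obtain hempty | hne := (latticeRow P (-3)).eq_empty_or_nonempty
    · simp [hempty]
    · have hwidth' := row_ncard_le hX hb (by norm_num : (-3 : ℤ) < -2) (by norm_num) hne h.top
      rw [h2] at hwidth'
      omega
  have hrow (y : ℤ) : (latticeRow (frontier P) y).ncard ≤ (latticeRow P y).ncard :=
    Set.ncard_le_ncard (fun _ hx => hsub hx) (finite_latticeRow hb y)
  have hmid (y : ℤ) (hy : -4 < y ∧ y < 0) : (latticeRow (frontier P) y).ncard ≤ 2 :=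
    ncard_latticeRow_frontier_le_two hX hK hq hp (Int.cast_lt.2 hy.2) (Int.cast_lt.2 hy.1)
  have hsum : bcount P = _ := h.ncard_latticePoints_eq_sum hb hsub
  rw [show Finset.Icc (-4 : ℤ) 0 = {-4, -3, -2, -1, 0} from rfl] at hsum
  simp only [Finset.sum_insert, Finset.mem_insert, Finset.mem_singleton, Finset.sum_singleton,
    Int.reduceNeg, Int.reduceEq, or_self, not_false_eq_true, neg_eq_zero] at hsum
  have := hrow (-4)
  have := hrow (-3)
  have := hrow 0
  have := hmid (-2) (by norm_num)
  have := hmid (-1) (by norm_num)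
  omega

lemma bcount_le_nine_of_edge (hP : IsLatticePolygon P) (hi : icount P = 1)
    (hm1 : -1 ∈ latticeRow P 0) (h1 : 1 ∈ latticeRow P 0)
    (hle : ∀ z ∈ latticePoints P, z.2 ≤ 0) : bcount P ≤ 9 := by
  have hX := hP.convex
  have hK := hP.isCompact
  obtain ⟨c, d, hrange⟩ := exists_isRowRange hK.isBounded ⟨(1, 0), h1⟩
  obtain rfl := hrange.eq_zero_of_nonpos ⟨1, h1⟩ hle
  obtain ⟨o, ho⟩ : ∃ o, latticePoints (interior P) = {o} := Set.ncard_eq_one.1 hi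
  have hoP : o ∈ latticePoints (interior P) := ho ▸ rfl
  obtain ⟨hco, ho0⟩ := hrange.snd_mem_Ioo hP hoP
  have h0 : 0 ∈ latticeRow P 0 := (ordConnected_latticeRow hX 0).out hm1 h1 (by simp)
  obtain ⟨x, hx⟩ := exists_latticeRow_sign_of_mem_interior hX h0 h1 hoP ho0.ne
  rw [Int.sign_eq_neg_one_of_neg ho0] at hx
  have hunique {z : ℤ × ℤ} (hz : z ∈ latticePoints (interior P)) : z = o := by
    rwa [ho, Set.mem_singleton_iff] at hz
  obtain rfl : (x, -1) = o := hunique hx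
  have hempty : (latticeRow (interior P) (-2)).ncard = 0 := by
    rw [Set.ncard_eq_zero (finite_latticeRow (hK.isBounded.subset interior_subset) _)]
    refine Set.eq_empty_of_forall_notMem fun k hk => ?_
    simpa using hunique (z := (k, -2)) hk
  have hthree : 3 ≤ (latticeRow P 0).ncard := by
    have hsub : (Finset.Icc (-1) 1 : Set ℤ) ⊆ latticeRow P 0 := fun k hk =>
      (ordConnected_latticeRow hX 0).out hm1 h1 (Finset.mem_Icc.1 (Finset.mem_coe.1 hk))
    simpa [Set.ncard_coe_finset, -Finset.coe_Icc] using
      Set.ncard_le_ncard hsub (finite_latticeRow hK.isBounded 0)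
  obtain hc | hc := le_or_gt c (-4)
  · exact hrange.bcount_le_nine_of_row_neg_two hX hK hc hthree hempty
  · have hbound := hrange.bcount_le hX hK (by omega)
    have hmul := hrange.mul_le_two_mul_icount hX hK.isBounded (by omega)
    rw [hi] at hmul
    obtain rfl | rfl : c = -2 ∨ c = -3 := by
      have : c < -1 := hco
      omega
    all_goals omega

lemma nonneg_or_nonpos_of_notMem_interior (hP : Convex ℝ P) (hm1 : -1 ∈ latticeRow P 0)
    (h1 : 1 ∈ latticeRow P 0) (h0 : 0 ∉ latticeRow (interior P) 0) :
    (∀ z ∈ latticePoints P, 0 ≤ z.2) ∨ ∀ z ∈ latticePoints P, z.2 ≤ 0 := by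
  by_contra! h
  obtain ⟨⟨d, hd, hd0⟩, ⟨u, hu, hu0⟩⟩ := h
  exact h0 (mk_mem_interior_of_chord hP hm1 h1 (by simp) hu hd (Int.cast_lt.2 hu0)
    (Int.cast_lt.2 hd0))

-- The midpoint `m` lies in the relative interior of an edge, which is moved to the line `y = 0`.
lemma bcount_le_nine (hP : IsLatticePolygon P) (hi : icount P = 1) : bcount P ≤ 9 := by
  by_contra! hb
  obtain ⟨z, hz, w, hw, m, hzw, hm, hmi⟩ := exists_midpoint_notMem_interior hP hi hb.le
  have hmz : m ≠ z := by
    rintro rfl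
    exact hzw (add_left_cancel hm).symm
  obtain ⟨φ, g, hg, hφm, hφz, -⟩ := UnimodularEquiv.exists_map_eq hmz
  have hφw := φ.toInt_eq_neg hm hφm
  rw [hφz] at hφw
  rw [← φ.mem_latticePoints_image] at hz hw hmi
  rw [hφz] at hz
  rw [hφw] at hw
  rw [← φ.interior_image, hφm] at hmi
  rw [← φ.bcount_image] at hb
  rw [← φ.icount_image] at hi
  replace hP := φ.isLatticePolygon_image hP
  set Q := φ.toReal '' P
  have hord := (ordConnected_latticeRow hP.convex 0).out hw hz
  have h1 : 1 ∈ latticeRow Q 0 := hord ⟨by omega, by omega⟩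
  have hm1 : -1 ∈ latticeRow Q 0 := hord ⟨by omega, by omega⟩
  obtain hge | hle := nonneg_or_nonpos_of_notMem_interior hP.convex hm1 h1 hmi
  · let ψ := UnimodularEquiv.neg
    refine hb.not_ge ((ψ.bcount_image Q).ge.trans ?_)
    refine bcount_le_nine_of_edge (ψ.isLatticePolygon_image hP) ((ψ.icount_image Q).trans hi)
      ((ψ.mem_latticePoints_image Q).2 h1) ((ψ.mem_latticePoints_image Q).2 hm1) fun v hv => ?_
    rw [ψ.latticePoints_image] at hv
    obtain ⟨v, hv, rfl⟩ := hv
    exact neg_nonpos.2 (hge v hv)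
  · exact hb.not_ge (bcount_le_nine_of_edge hP hi hm1 h1 hle)

end OneInteriorPoint

section LowerHull

/-- The convex hull of the lattice points of `P` in the closed lower half-plane; the smaller
polygon to which the induction hypothesis is applied. -/
def lowerHull (P : Set (ℝ × ℝ)) : Set (ℝ × ℝ) :=
  convexHull ℝ (toR2 '' {z ∈ latticePoints P | z.2 ≤ 0})

variable {P : Set (ℝ × ℝ)}

lemma mem_latticePoints_lowerHull {z : ℤ × ℤ} (hz : z ∈ latticePoints P) (hz2 : z.2 ≤ 0) :
    z ∈ latticePoints (lowerHull P) :=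
  subset_convexHull ℝ _ (Set.mem_image_of_mem toR2 ⟨hz, hz2⟩)

lemma lowerHull_subset (hP : Convex ℝ P) : lowerHull P ⊆ P :=
  convexHull_min (Set.image_subset_iff.2 fun _ hz => hz.1) hP

lemma snd_neg_of_mem_interior_lowerHull {p : ℝ × ℝ} (hp : p ∈ interior (lowerHull P)) :
    p.2 < 0 := by
  have hmem := snd_mem_interior_of_convexHull (convex_Iic (0 : ℝ))
    (fun z hz => Set.mem_Iic.2 (Int.cast_nonpos.2 hz.2)) hp
  rwa [interior_Iic] at hmem

lemma icount_lowerHull_add_two_le (hP : Convex ℝ P) (hb : IsBounded P)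
    (h0 : 0 ∈ latticeRow (interior P) 0) (h1 : 1 ∈ latticeRow (interior P) 0) :
    icount (lowerHull P) + 2 ≤ icount P := by
  have hfin : (latticePoints (interior P)).Finite :=
    finite_latticePoints (hb.subset interior_subset)
  have hsub : latticePoints (interior (lowerHull P)) ⊆ latticePoints (interior P) :=
    latticePoints_mono (interior_mono (lowerHull_subset hP))
  have hdisj : Disjoint (latticePoints (interior (lowerHull P))) {(0, 0), (1, 0)} := by
    refine Set.disjoint_left.2 fun z hz hz' => (snd_neg_of_mem_interior_lowerHull hz).ne ?_
    obtain rfl | rfl := hz' <;> simp [toR2]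
  have hcard := Set.ncard_union_eq hdisj (hfin.subset hsub)
  rw [Set.ncard_pair (by simp)] at hcard
  refine hcard.ge.trans (Set.ncard_le_ncard (Set.union_subset hsub ?_) hfin)
  exact Set.pair_subset h0 h1

lemma isLatticePolygon_lowerHull (hb : IsBounded P) (hi : 1 ≤ icount (lowerHull P)) :
    IsLatticePolygon (lowerHull P) := by
  have hfin := (finite_latticePoints hb).subset (Set.sep_subset _ fun z => z.2 ≤ 0)
  obtain ⟨z, hz⟩ := Set.nonempty_of_ncard_ne_zero (Nat.one_le_iff_ne_zero.1 hi)
  refine ⟨hfin.toFinset, by rw [hfin.coe_toFinset, lowerHull], ?_⟩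
  rw [lowerHull, affineSpan_convexHull]
  exact affineSpan_eq_top_of_nonempty_interior ⟨_, hz⟩

lemma ncard_latticePoints_le_lowerHull_add (hP : Convex ℝ P) (hb : IsBounded P)
    (hle : ∀ z ∈ latticePoints P, z.2 ≤ 1) : (latticePoints P).ncard ≤
      (latticePoints (lowerHull P)).ncard + (latticeRow P 1).ncard := by
  have hsub : latticePoints P ⊆
      latticePoints (lowerHull P) ∪ (fun x => (x, 1)) '' latticeRow P 1 := fun z hz => by
    obtain hz2 | hz2 := (hle z hz).lt_or_eq
    · exact .inl (mem_latticePoints_lowerHull hz (Int.lt_add_one_iff.1 hz2))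
    · exact .inr ⟨z.1, hz2 ▸ hz, Prod.ext rfl hz2.symm⟩
  have hrow := finite_latticeRow hb 1
  refine (Set.ncard_le_ncard hsub (.union ?_ (hrow.image _))).trans
    ((Set.ncard_union_le _ _).trans (Nat.add_le_add_left (Set.ncard_image_le hrow) _))
  exact (finite_latticePoints hb).subset (latticePoints_mono (lowerHull_subset hP))

end LowerHull

section TallPolygon

variable {P : Set (ℝ × ℝ)}

lemma le_icount_of_add_smul_mem (hP : Convex ℝ P) (hb : IsBounded P) {p v : ℤ × ℤ} (hv : v ≠ 0)
    {h : ℕ} (hp : p ∈ latticePoints (interior P)) (hpv : p + (h : ℤ) • v ∈ latticePoints P) :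
    h ≤ icount P := by
  have hmem : ∀ j ∈ (Finset.range h : Set ℕ), p + (j : ℤ) • v ∈ latticePoints (interior P) := by
    intro j hj
    have hjh : (j : ℝ) < h := Nat.cast_lt.2 (Finset.mem_range.1 (Finset.mem_coe.1 hj))
    have hh : (0 : ℝ) < h := j.cast_nonneg.trans_lt hjh
    have hcombo : toR2 (p + (j : ℤ) • v) =
        (1 - j / h : ℝ) • toR2 p + (j / h : ℝ) • toR2 (p + (h : ℤ) • v) := by
      ext <;> simp only [toR2, Prod.fst_add, Prod.snd_add, Prod.smul_fst, Prod.smul_snd,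
        smul_eq_mul, Int.cast_add, Int.cast_mul, Int.cast_natCast] <;> field_simp <;> ring
    have hint := hP.combo_interior_self_mem_interior hp hpv
      (sub_pos.2 ((div_lt_one hh).2 hjh)) (by positivity) (sub_add_cancel _ _)
    rwa [← hcombo] at hint
  rw [← Finset.card_range h, ← Set.ncard_coe_finset]
  refine Set.ncard_le_ncard_of_injOn _ hmem (fun i _ j _ hij => ?_)
    (finite_latticePoints (hb.subset interior_subset))
  exact Nat.cast_injective (smul_left_injective ℤ hv (add_left_cancel hij))

lemma mem_latticeRow_interior_of_triangle (hP : Convex ℝ P) (h0 : 0 ∈ latticeRow P 0)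
    (h1 : 1 ∈ latticeRow P 0) {x h m : ℤ} (hx : x ∈ latticeRow P (-h)) (hxm : x < h * m)
    (hmx : h * m < x + h - 1) : m ∈ latticeRow (interior P) (-1) := by
  have hh : (1 : ℝ) < h := by exact_mod_cast (by omega : 1 < h)
  have hh0 : (0 : ℝ) < h := zero_lt_one.trans hh
  have hchord {s : ℤ} (hs : s ∈ latticeRow P 0) :
      (((h - 1) * s + x : ℝ) / h, ((-1 : ℤ) : ℝ)) ∈ P := by
    convert hP hs hx (a := (h - 1) / h) (b := 1 / h) (div_nonneg (sub_nonneg.2 hh.le) hh0.le)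
      (one_div_nonneg.2 hh0.le) (by field_simp; ring) using 1
    ext <;> simp only [toR2, Prod.fst_add, Prod.snd_add, Prod.smul_fst, Prod.smul_snd, smul_eq_mul,
      Int.cast_zero, Int.cast_neg, Int.cast_one] <;> field_simp
    ring
  refine mk_mem_interior_of_chord hP (hchord h0) (hchord h1) ⟨?_, ?_⟩ h0 hx (by simp [toR2])
    (by simpa [toR2] using hh)
  · rw [div_lt_iff₀ hh0, mul_comm (m : ℝ)]
    simpa using (Int.cast_lt (R := ℝ)).2 hxm
  · rw [lt_div_iff₀ hh0, mul_comm (m : ℝ)]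
    have := (Int.cast_lt (R := ℝ)).2 hmx
    push_cast at this ⊢
    linarith

-- If the lattice cuts neither the segment from `(0, 0)` nor the one from `(1, 0)` to `(x, -h)` into
-- `h` parts, then the triangle they span has an interior lattice point of height `-1`.
lemma le_icount_of_icount_lowerHull_eq_zero (hP : Convex ℝ P) (hb : IsBounded P)
    (h0 : 0 ∈ latticeRow (interior P) 0) (h1 : 1 ∈ latticeRow (interior P) 0)
    (hi : icount (lowerHull P) = 0) {x : ℤ} {h : ℕ} (hh : 0 < h) (hx : x ∈ latticeRow P (-h)) :
    h ≤ icount P := by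
  obtain ⟨m, hm, hm'⟩ := exists_mul_mem_Icc x (Nat.cast_pos.2 hh : (0 : ℤ) < h)
  obtain hleft | hm := hm.eq_or_lt
  · refine le_icount_of_add_smul_mem hP hb (p := (0, 0)) (v := (m, -1)) (by simp) h0 ?_
    have hxm : (0, 0) + (h : ℤ) • (m, -1) = (x, -(h : ℤ)) := by simp [hleft]
    exact hxm ▸ hx
  obtain hright | hm' := hm'.eq_or_lt
  · refine le_icount_of_add_smul_mem hP hb (p := (1, 0)) (v := (m - 1, -1)) (by simp) h1 ?_
    have hxm : (1, 0) + (h : ℤ) • (m - 1, -1) = (x, -(h : ℤ)) := by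
      ext
      · simp only [Prod.fst_add, Prod.smul_fst, smul_eq_mul]
        linarith
      · simp
    exact hxm ▸ hx
  · have hlower {s : ℤ} (hs : s ∈ latticeRow (interior P) 0) : s ∈ latticeRow (lowerHull P) 0 :=
      mem_latticePoints_lowerHull (latticePoints_mono interior_subset hs) le_rfl
    have hmem := mem_latticeRow_interior_of_triangle (convex_convexHull ℝ _) (hlower h0)
      (hlower h1) (mem_latticePoints_lowerHull hx (by simp)) hm hm'
    have hfin := finite_latticePoints (hb.subset (interior_subset.trans (lowerHull_subset hP)))
    exact absurd ((Set.ncard_eq_zero hfin).1 hi) (Set.Nonempty.ne_empty ⟨_, hmem⟩)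

end TallPolygon

section Induction

variable {P : Set (ℝ × ℝ)}

lemma bcount_le_of_zero_mem_of_one_mem (hP : IsLatticePolygon P)
    (h0 : 0 ∈ latticeRow (interior P) 0) (h1 : 1 ∈ latticeRow (interior P) 0)
    (hle : ∀ z ∈ latticePoints (interior P), z.2 ≤ 0)
    (ih : ∀ Q, IsLatticePolygon Q → 1 ≤ icount Q → icount Q < icount P →
      bcount Q ≤ 2 * icount Q + 7) : bcount P ≤ 2 * icount P + 6 := by
  have hX := hP.convex
  have hK := hP.isCompact
  obtain ⟨c, d, hrange⟩ :=
    exists_isRowRange hK.isBounded ⟨(0, 0), latticePoints_mono interior_subset h0⟩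
  obtain ⟨hc, hd⟩ := hrange.snd_mem_Ioo hP (z := (0, 0)) h0
  obtain ⟨xd, hxd⟩ := hrange.top
  obtain ⟨xc, hxc⟩ := hrange.bot
  obtain rfl : d = 1 := by
    by_contra hd1
    have hd2 : 2 ≤ |d| := le_abs.2 (by omega)
    obtain ⟨x, hx⟩ := exists_latticeRow_sign_of_mem hX h0 h1 (z := (xd, d)) hxd hd2
    have hle0 := hle (x, d.sign) hx
    simp only [Int.sign_eq_one_of_pos hd] at hle0
    omega
  obtain hrows | hrows := le_or_gt 6 ((latticeRow P c).ncard + (latticeRow P 1).ncard)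
  · exact hrange.bcount_le_two_mul_icount_add_six hX hK (by omega) hrows
  obtain hi | hi := (icount (lowerHull P)).eq_zero_or_pos
  · have hbound := hrange.bcount_le hX hK (by omega)
    obtain ⟨h, rfl⟩ := Int.exists_eq_neg_ofNat hc.le
    have hh := le_icount_of_icount_lowerHull_eq_zero hX hK.isBounded h0 h1 hi (by omega) hxc
    omega
  · have hdrop := icount_lowerHull_add_two_le hX hK.isBounded h0 h1
    have hQ := isLatticePolygon_lowerHull hK.isBounded hi
    have hbound := ih _ hQ hi (by omega)
    have htotal := ncard_latticePoints_le_lowerHull_add hX hK.isBounded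
      fun z hz => (Finset.mem_Icc.1 (hrange.snd_mem_Icc z hz)).2
    rw [ncard_latticePoints_eq_bcount_add_icount hK,
      ncard_latticePoints_eq_bcount_add_icount hQ.isCompact] at htotal
    omega

lemma bcount_le_of_two_le_icount (hP : IsLatticePolygon P) (hi : 2 ≤ icount P)
    (ih : ∀ Q, IsLatticePolygon Q → 1 ≤ icount Q → icount Q < icount P →
      bcount Q ≤ 2 * icount Q + 7) : bcount P ≤ 2 * icount P + 6 := by
  have hfin : (latticePoints (interior P)).Finite :=
    finite_latticePoints (hP.isCompact.isBounded.subset interior_subset)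
  obtain ⟨φ, g, hg, h0, hgI, hle⟩ := exists_unimodularEquiv_of_nontrivial hfin
    ((Set.one_lt_ncard hfin).1 hi)
  rw [← φ.latticePoints_image, ← φ.interior_image] at h0 hgI
  rw [← φ.icount_image] at ih ⊢
  rw [← φ.bcount_image]
  replace hP := φ.isLatticePolygon_image hP
  have h1 := (ordConnected_latticeRow hP.convex.interior 0).out h0 hgI
    (show (1 : ℤ) ∈ Set.Icc 0 g from ⟨by omega, by omega⟩)
  refine bcount_le_of_zero_mem_of_one_mem hP h0 h1 (fun z hz => ?_) ih
  rw [φ.interior_image, φ.latticePoints_image] at hz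
  obtain ⟨z, hz, rfl⟩ := hz
  exact hle z hz

end Induction

/-- **Scott's theorem.** For a lattice polygon `P` with `i(P) ≥ 1`, either
`(b(P), i(P)) = (9, 1)` or `b(P) ≤ 2·i(P) + 6`. -/
theorem scott (P : Set (ℝ × ℝ)) (hP : IsLatticePolygon P) (hi : 1 ≤ icount P) :
    (bcount P = 9 ∧ icount P = 1) ∨ bcount P ≤ 2 * icount P + 6 := by
  induction hn : icount P using Nat.strong_induction_on generalizing P with
  | _ n ih =>
    subst hn
    obtain hone | htwo := hi.eq_or_lt'
    · have hnine := bcount_le_nine hP hone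
      omega
    · refine .inr (bcount_le_of_two_le_icount hP htwo fun Q hQ hQi hlt => ?_)
      have := ih _ hlt Q hQ hQi rfl
      omega
end

section
/- A pair (b, i) of nonnegative integers equals (b(P), i(P)) for some lattice polygon P if and only if (i = 0 and b ≥ 3), or (i ≥ 1 and 3 ≤ b ≤ 2i + 6), or (b, i) = (9, 1). -/
open MeasureTheory

/-!
For the upper bound, choose lattice coordinates in which the vertical extent `p` of `P` is as small
as possible, and count the lattice points of `P` row by row. Let `s` be the sum of the lengths of
the bottom and the top row. Interior rows contain at most two boundary points each, so `b ≤ s + 2p`;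
comparing row lengths with point counts also gives `b - 2i ≤ 2s + 4p - 2 - T`, where `T` is twice
the area of the polygon with vertices at the row ends. Row lengths are concave in the height, so
`T ≥ ps`. If `s ≤ p`, minimality of `p` under shears gives the stronger bound `T ≥ p(p + s)/2`: the
polygon contains a segment from its bottom to its top edge, of slope within `(p - s)/(2p)` of an
integer `t`, and since the width in the direction `x - ty` is at least `p`, points far from that
segment span triangles of large total area. Comparing these bounds for `s ≥ 4` and for `p = 2`,
`p = 3`, `p ≥ 4` leaves only the exceptional pair `(9, 1)`. All other pairs are realised with at
most three rows.
-/

section Counting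

variable {K : Type*} [Field K] [LinearOrder K] [IsStrictOrderedRing K] [FloorRing K]

lemma card_Icc_ceil_floor_le {l r : K} (h : l ≤ r) :
    ((Finset.Icc ⌈l⌉ ⌊r⌋).card : K) ≤ r - l + 1 := by
  rw [Int.card_Icc, ← Int.cast_natCast, Int.toNat_eq_max, Int.cast_max]
  refine max_le ?_ (by push_cast; linarith)
  push_cast
  linarith [Int.le_ceil l, Int.floor_le r]

lemma sub_sub_one_le_card_Ioo_floor_ceil (l r : K) :
    r - l - 1 ≤ (Finset.Ioo ⌊l⌋ ⌈r⌉).card := by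
  rw [Int.card_Ioo, ← Int.cast_natCast]
  calc r - l - 1 ≤ ((⌈r⌉ - ⌊l⌋ - 1 : ℤ) : K) := by
        push_cast; linarith [Int.floor_le l, Int.le_ceil r]
    _ ≤ _ := by exact_mod_cast Int.self_le_toNat _

lemma card_Icc_ceil_floor_le_card_Ioo_add_two (l r : K) :
    (Finset.Icc ⌈l⌉ ⌊r⌋).card ≤ (Finset.Ioo ⌊l⌋ ⌈r⌉).card + 2 := by
  rw [Int.card_Icc, Int.card_Ioo]
  have := Int.floor_le_ceil l
  have := Int.floor_le_ceil r
  omega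

lemma exists_int_abs_sub_sub_mul_le {a b c d p : K} (hab : a ≤ b) (hcd : c ≤ d) (hp : 0 < p)
    (hs : b - a + (d - c) ≤ p) :
    ∃ t : ℤ, ∃ x ∈ Set.Icc a b, ∃ y ∈ Set.Icc c d,
      |y - x - t * p| ≤ (p - (b - a + (d - c))) / 2 := by
  -- Interpolate between centres and endpoints proportionally to the rounding error of the slope.
  set μ := (c + d) / 2 - (a + b) / 2 with hμ
  set δ := (round (μ / p) : K) - μ / p with hδ
  have hδ_le : |δ| ≤ 1 / 2 := by rw [hδ, abs_sub_comm]; exact abs_sub_round _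
  obtain ⟨hδ₁, hδ₂⟩ := abs_le.mp hδ_le
  refine ⟨round (μ / p), (a + b) / 2 - δ * (b - a), ⟨?_, ?_⟩,
    (c + d) / 2 + δ * (d - c), ⟨?_, ?_⟩, ?_⟩
  iterate 4 nlinarith
  have hround : (round (μ / p) : K) * p = μ + δ * p := by rw [hδ]; field_simp; ring
  calc _ = |-(δ * (p - (b - a + (d - c))))| := by rw [hround]; congr 1; rw [hμ]; ring
    _ = |δ| * (p - (b - a + (d - c))) := by rw [abs_neg, abs_mul, abs_of_nonneg (sub_nonneg.2 hs)]
    _ ≤ _ := by nlinarith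

end Counting

section TrapezoidSum

variable {K : Type*} [Field K] [LinearOrder K] [IsStrictOrderedRing K]

lemma chord_le_of_concaveOn {g : K → K} {a b : ℕ} (hab : a ≤ b)
    (hg : ConcaveOn K (Set.Icc (a : K) (b + 1 : ℕ)) g) :
    g a + (b - a) * g (b + 1 : ℕ) ≤ (b + 1 - a) * g b := by
  have hab' : (a : K) ≤ b := by exact_mod_cast hab
  have hpos : (0 : K) < b + 1 - a := by linarith
  have hle : (a : K) ≤ (b + 1 : ℕ) := by push_cast; linarith
  have h := hg.2 (Set.left_mem_Icc.2 hle) (Set.right_mem_Icc.2 hle)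
    (show (0 : K) ≤ 1 / (b + 1 - a) by positivity)
    (show (0 : K) ≤ (b - a) / (b + 1 - a) from div_nonneg (by linarith) hpos.le)
    (by field_simp; ring)
  have hb : (1 / (b + 1 - a) : K) • (a : K) +
      ((b - a) / (b + 1 - a) : K) • ((b + 1 : ℕ) : K) = b := by
    simp only [smul_eq_mul]; push_cast; field_simp; ring
  rw [hb, smul_eq_mul, smul_eq_mul, div_mul_eq_mul_div, div_mul_eq_mul_div, ← add_div,
    div_le_iff₀ hpos] at h
  linarith

lemma mul_add_le_sum_Ico_of_concaveOn {g : K → K} {a b : ℕ} (hab : a ≤ b)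
    (hg : ConcaveOn K (Set.Icc (a : K) b) g) :
    (b - a) * (g a + g b) ≤ ∑ k ∈ Finset.Ico a b, (g k + g (k + 1 : ℕ)) := by
  induction b, hab using Nat.le_induction with
  | base => simp
  | succ b hab ih =>
    have ih := ih (hg.subset (Set.Icc_subset_Icc_right (by simp)) (convex_Icc _ _))
    rw [Finset.sum_Ico_succ_top hab]
    have := chord_le_of_concaveOn hab hg
    rw [Nat.cast_add_one] at *
    linarith

lemma mul_le_sum_range_of_concaveOn {g : K → K} {n m : ℕ} (hm : m ≤ n)
    (hg : ConcaveOn K (Set.Icc (0 : K) n) g) (h0 : 0 ≤ g 0) (hn : 0 ≤ g n) :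
    n * g m ≤ ∑ k ∈ Finset.range n, (g k + g (k + 1 : ℕ)) := by
  have hmn : (m : K) ≤ n := by exact_mod_cast hm
  have hleft := mul_add_le_sum_Ico_of_concaveOn m.zero_le
    (hg.subset (by simpa using Set.Icc_subset_Icc_right hmn) (convex_Icc _ _))
  have hright := mul_add_le_sum_Ico_of_concaveOn hm
    (hg.subset (Set.Icc_subset_Icc_left (by simp)) (convex_Icc _ _))
  rw [Finset.range_eq_Ico, ← Finset.sum_Ico_consecutive _ m.zero_le hm]
  simp only [Nat.cast_zero, sub_zero] at hleft
  linarith [mul_nonneg (Nat.cast_nonneg (α := K) m) h0, mul_nonneg (sub_nonneg.2 hmn) hn]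

end TrapezoidSum

section Rows

variable {E : Type*} {P : Set (ℝ × E)} {x : ℝ} {y : E}

/-- The left end of the horizontal slice of `P` at height `y`; meaningful when that slice is
nonempty and bounded below, and `0` otherwise. -/
noncomputable def rowLeft (P : Set (ℝ × E)) (y : E) : ℝ := sInf {x | (x, y) ∈ P}

/-- The right end of the horizontal slice of `P` at height `y`; meaningful when that slice is
nonempty and bounded above, and `0` otherwise. -/
noncomputable def rowRight (P : Set (ℝ × E)) (y : E) : ℝ := sSup {x | (x, y) ∈ P}

lemma rowLeft_eq (hx : (x, y) ∈ P) (hle : ∀ z ∈ P, z.2 = y → x ≤ z.1) : rowLeft P y = x :=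
  IsLeast.csInf_eq ⟨hx, fun x' hx' => hle (x', y) hx' rfl⟩

lemma rowRight_eq (hx : (x, y) ∈ P) (hle : ∀ z ∈ P, z.2 = y → z.1 ≤ x) : rowRight P y = x :=
  IsGreatest.csSup_eq ⟨hx, fun x' hx' => hle (x', y) hx' rfl⟩

lemma row_nonempty (hy : y ∈ Prod.snd '' P) : {x | (x, y) ∈ P}.Nonempty := by
  obtain ⟨⟨x, _⟩, hx, rfl⟩ := hy
  exact ⟨x, hx⟩

variable [NormedAddCommGroup E]

lemma isCompact_row (hP : IsCompact P) (y : E) : IsCompact {x | (x, y) ∈ P} :=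
  (hP.image continuous_fst).of_isClosed_subset (hP.isClosed.preimage (by fun_prop))
    fun x hx => ⟨(x, y), hx, rfl⟩

lemma rowLeft_mem (hP : IsCompact P) (hy : y ∈ Prod.snd '' P) : (rowLeft P y, y) ∈ P :=
  (isCompact_row hP y).sInf_mem (row_nonempty hy)

lemma rowRight_mem (hP : IsCompact P) (hy : y ∈ Prod.snd '' P) : (rowRight P y, y) ∈ P :=
  (isCompact_row hP y).sSup_mem (row_nonempty hy)

lemma rowLeft_le (hP : IsCompact P) (hx : (x, y) ∈ P) : rowLeft P y ≤ x :=
  csInf_le (isCompact_row hP y).bddBelow hx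

lemma le_rowRight (hP : IsCompact P) (hx : (x, y) ∈ P) : x ≤ rowRight P y :=
  le_csSup (isCompact_row hP y).bddAbove hx

lemma rowLeft_le_rowRight (hP : IsCompact P) (hy : y ∈ Prod.snd '' P) :
    rowLeft P y ≤ rowRight P y :=
  rowLeft_le hP (rowRight_mem hP hy)

variable [NormedSpace ℝ E]

lemma convex_snd_image (hc : Convex ℝ P) : Convex ℝ (Prod.snd '' P) :=
  hc.linear_image (LinearMap.snd ℝ ℝ E)

lemma mem_iff_mem_Icc_rows (hP : IsCompact P) (hc : Convex ℝ P) :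
    (x, y) ∈ P ↔ y ∈ Prod.snd '' P ∧ x ∈ Set.Icc (rowLeft P y) (rowRight P y) := by
  refine ⟨fun hx => ⟨⟨_, hx, rfl⟩, rowLeft_le hP hx, le_rowRight hP hx⟩, fun ⟨hy, hx⟩ => ?_⟩
  have hrow : Convex ℝ {x | (x, y) ∈ P} :=
    hc.affine_preimage (AffineMap.prod (AffineMap.id ℝ ℝ) (AffineMap.const ℝ ℝ y))
  exact hrow.ordConnected.out (rowLeft_mem hP hy) (rowRight_mem hP hy) hx

lemma convexOn_rowLeft (hP : IsCompact P) (hc : Convex ℝ P) :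
    ConvexOn ℝ (Prod.snd '' P) (rowLeft P) :=
  ⟨convex_snd_image hc, fun _ hy _ hy' _ _ ha hb hab =>
    rowLeft_le hP (hc (rowLeft_mem hP hy) (rowLeft_mem hP hy') ha hb hab)⟩

lemma concaveOn_rowRight (hP : IsCompact P) (hc : Convex ℝ P) :
    ConcaveOn ℝ (Prod.snd '' P) (rowRight P) :=
  ⟨convex_snd_image hc, fun _ hy _ hy' _ _ ha hb hab =>
    le_rowRight hP (hc (rowRight_mem hP hy) (rowRight_mem hP hy') ha hb hab)⟩

lemma mem_interior_iff_mem_Ioo_rows [FiniteDimensional ℝ E] (hP : IsCompact P) (hc : Convex ℝ P) :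
    (x, y) ∈ interior P ↔
      y ∈ interior (Prod.snd '' P) ∧ x ∈ Set.Ioo (rowLeft P y) (rowRight P y) := by
  constructor
  · intro h
    have hy : y ∈ interior (Prod.snd '' P) := isOpenMap_snd.image_interior_subset P ⟨_, h, rfl⟩
    have hrow : {x | (x, y) ∈ P} = Set.Icc (rowLeft P y) (rowRight P y) := by
      ext x
      simp only [Set.mem_ofPred_eq, mem_iff_mem_Icc_rows hP hc, interior_subset hy, true_and]
    have hx : x ∈ interior {x | (x, y) ∈ P} :=
      preimage_interior_subset_interior_preimage (f := fun x : ℝ => (x, y)) (by fun_prop) h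
    rw [hrow, interior_Icc] at hx
    exact ⟨hy, hx⟩
  · rintro ⟨hy, hl, hr⟩
    have hy_nhds := isOpen_interior.mem_nhds hy
    have hL := (convexOn_rowLeft hP hc).continuousOn_interior.continuousAt hy_nhds
    have hR := (concaveOn_rowRight hP hc).continuousOn_interior.continuousAt hy_nhds
    have hsnd : Filter.Tendsto Prod.snd (nhds (x, y)) (nhds y) := continuous_snd.tendsto _
    have hfst : Filter.Tendsto Prod.fst (nhds (x, y)) (nhds x) := continuous_fst.tendsto _
    rw [mem_interior_iff_mem_nhds]
    filter_upwards [hsnd.eventually hy_nhds, (hL.tendsto.comp hsnd).eventually_lt hfst hl,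
      hfst.eventually_lt (hR.tendsto.comp hsnd) hr] with z hz hzl hzr
    exact (mem_iff_mem_Icc_rows hP hc).2 ⟨interior_subset hz, hzl.le, hzr.le⟩

end Rows

section RowCounting

lemma finite_setOf_toR2_mem {P : Set (ℝ × ℝ)} (hP : IsCompact P) :
    {z : ℤ × ℤ | toR2 z ∈ P}.Finite := by
  have hemb : Topology.IsClosedEmbedding toR2 :=
    Int.isClosedEmbedding_coe_real.prodMap Int.isClosedEmbedding_coe_real
  exact (hemb.isCompact_preimage hP).finite_of_discrete

lemma bcount_add_icount {P : Set (ℝ × ℝ)} (hP : IsCompact P) :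
    bcount P + icount P = {z : ℤ × ℤ | toR2 z ∈ P}.ncard := by
  have hfin := finite_setOf_toR2_mem hP
  have hsub : {z : ℤ × ℤ | toR2 z ∈ interior P} ⊆ {z | toR2 z ∈ P} :=
    Set.preimage_mono interior_subset
  rw [← Set.ncard_sdiff_add_ncard_of_subset hsub hfin, bcount, icount, hP.isClosed.frontier_eq]
  rfl

lemma ncard_rows (I : Finset ℕ) (X : ℕ → Finset ℤ) :
    {z : ℤ × ℤ | ∃ k ∈ I, z.2 = k ∧ z.1 ∈ X k}.ncard = ∑ k ∈ I, (X k).card := by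
  have hrows : {z : ℤ × ℤ | ∃ k ∈ I, z.2 = k ∧ z.1 ∈ X k} =
      (fun q : Σ _ : ℕ, ℤ => (q.2, (q.1 : ℤ))) '' (I.sigma X : Set (Σ _ : ℕ, ℤ)) := by
    ext ⟨x, y⟩
    constructor
    · rintro ⟨k, hk, rfl, hx⟩
      exact ⟨⟨k, x⟩, Finset.mem_sigma.2 ⟨hk, hx⟩, rfl⟩
    · rintro ⟨⟨k, x⟩, hq, ⟨⟩⟩
      obtain ⟨hk, hx⟩ := Finset.mem_sigma.1 hq
      exact ⟨k, hk, rfl, hx⟩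
  have hinj : Function.Injective (fun q : Σ _ : ℕ, ℤ => (q.2, (q.1 : ℤ))) := by
    rintro ⟨k, x⟩ ⟨k', x'⟩ h
    simp_all
  rw [hrows, Set.ncard_image_of_injective _ hinj, Set.ncard_coe_finset, Finset.card_sigma]

variable {P : Set (ℝ × ℝ)} {p : ℕ}

lemma icount_eq_sum_rows (hP : IsCompact P) (hc : Convex ℝ P)
    (hp : Prod.snd '' P = Set.Icc (0 : ℝ) p) :
    icount P = ∑ k ∈ Finset.Ioo 0 p, (Finset.Ioo ⌊rowLeft P k⌋ ⌈rowRight P k⌉).card := by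
  rw [← ncard_rows, icount]
  congr 1
  ext ⟨x, y⟩
  simp only [Set.mem_ofPred_eq, toR2, mem_interior_iff_mem_Ioo_rows hP hc, hp, interior_Icc,
    Set.mem_Ioo, Finset.mem_Ioo, Int.floor_lt, Int.lt_ceil]
  constructor
  · rintro ⟨⟨h0, hyp⟩, hx⟩
    lift y to ℕ using by exact_mod_cast h0.le
    exact ⟨y, by exact_mod_cast And.intro h0 hyp, rfl, by exact_mod_cast hx⟩
  · rintro ⟨k, hk, rfl, hx⟩
    exact_mod_cast And.intro hk hx

lemma bcount_add_icount_eq_sum_rows (hP : IsCompact P) (hc : Convex ℝ P)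
    (hp : Prod.snd '' P = Set.Icc (0 : ℝ) p) :
    bcount P + icount P =
      ∑ k ∈ Finset.Icc 0 p, (Finset.Icc ⌈rowLeft P k⌉ ⌊rowRight P k⌋).card := by
  rw [bcount_add_icount hP, ← ncard_rows]
  congr 1
  ext ⟨x, y⟩
  simp only [Set.mem_ofPred_eq, toR2, mem_iff_mem_Icc_rows hP hc, hp, Set.mem_Icc,
    Finset.mem_Icc, Int.ceil_le, Int.le_floor]
  constructor
  · rintro ⟨⟨h0, hyp⟩, hx⟩
    lift y to ℕ using by exact_mod_cast h0
    exact ⟨y, by exact_mod_cast And.intro h0 hyp, rfl, by exact_mod_cast hx⟩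
  · rintro ⟨k, hk, rfl, hx⟩
    exact_mod_cast And.intro hk hx

end RowCounting

section UpperBound

/-- The length of the horizontal slice of `P` at height `y`. -/
noncomputable def rowLength {E : Type*} (P : Set (ℝ × E)) (y : E) : ℝ := rowRight P y - rowLeft P y

lemma sum_Icc_eq_add_sum_Ioo_add {M : Type*} [AddCommMonoid M] (f : ℕ → M) {p : ℕ} (hp : 0 < p) :
    ∑ k ∈ Finset.Icc 0 p, f k = f 0 + ∑ k ∈ Finset.Ioo 0 p, f k + f p := by
  rw [Finset.add_sum_Ioo_eq_sum_Ico hp, Finset.sum_Ico_add_eq_sum_Icc hp.le]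

lemma sum_range_add_succ {R : Type*} [CommRing R] (f : ℕ → R) {p : ℕ} (hp : 0 < p) :
    ∑ k ∈ Finset.range p, (f k + f (k + 1)) = f 0 + 2 * ∑ k ∈ Finset.Ioo 0 p, f k + f p := by
  have hshift := (Finset.sum_range_succ' f p).symm.trans (Finset.sum_range_succ f p)
  have hsplit := Finset.add_sum_Ioo_eq_sum_Ico (f := f) hp
  rw [← Finset.range_eq_Ico] at hsplit
  rw [Finset.sum_add_distrib]
  linear_combination hshift - 2 * hsplit

variable {P : Set (ℝ × ℝ)} {p : ℕ}

lemma bcount_le_rowLength_add (hP : IsCompact P) (hc : Convex ℝ P)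
    (hp : Prod.snd '' P = Set.Icc (0 : ℝ) p) (hp0 : 0 < p) :
    (bcount P : ℝ) ≤ rowLength P 0 + rowLength P p + 2 * p := by
  have hrow {y : ℝ} (hy : y ∈ Set.Icc (0 : ℝ) p) : rowLeft P y ≤ rowRight P y :=
    rowLeft_le_rowRight hP (hp ▸ hy)
  have hbottom := card_Icc_ceil_floor_le (hrow (y := (0 : ℕ)) (by simp))
  have htop := card_Icc_ceil_floor_le (hrow (y := p) (by simp))
  have hmiddle : ∑ k ∈ Finset.Ioo 0 p, (Finset.Icc ⌈rowLeft P k⌉ ⌊rowRight P k⌋).card ≤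
      icount P + 2 * (p - 1) := by
    refine (Finset.sum_le_sum fun k _ => card_Icc_ceil_floor_le_card_Ioo_add_two _ _).trans_eq ?_
    rw [Finset.sum_add_distrib, icount_eq_sum_rows hP hc hp]
    simp [mul_comm]
  have htotal := bcount_add_icount_eq_sum_rows hP hc hp
  rw [sum_Icc_eq_add_sum_Ioo_add _ hp0] at htotal
  have hcount : bcount P + 2 ≤ (Finset.Icc ⌈rowLeft P (0 : ℕ)⌉ ⌊rowRight P (0 : ℕ)⌋).card +
      (Finset.Icc ⌈rowLeft P p⌉ ⌊rowRight P p⌋).card + 2 * p := by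
    omega
  rify at hcount
  rw [Nat.cast_zero] at hbottom
  rw [rowLength, rowLength]
  linarith

lemma bcount_sub_two_mul_icount_le (hP : IsCompact P) (hc : Convex ℝ P)
    (hp : Prod.snd '' P = Set.Icc (0 : ℝ) p) (hp0 : 0 < p) :
    (bcount P : ℝ) - 2 * icount P ≤ 2 * (rowLength P 0 + rowLength P p) + 4 * p - 2 -
      ∑ k ∈ Finset.range p, (rowLength P k + rowLength P (k + 1 : ℕ)) := by
  have htotal : (bcount P + icount P : ℝ) ≤ ∑ k ∈ Finset.Icc 0 p, (rowLength P k + 1) := by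
    rw [← Nat.cast_add, bcount_add_icount_eq_sum_rows hP hc hp, Nat.cast_sum]
    refine Finset.sum_le_sum fun k hk =>
      card_Icc_ceil_floor_le (rowLeft_le_rowRight hP (hp ▸ ⟨k.cast_nonneg, ?_⟩))
    exact_mod_cast (Finset.mem_Icc.1 hk).2
  have hinterior : ∑ k ∈ Finset.Ioo 0 p, (rowLength P k - 1) ≤ icount P := by
    rw [icount_eq_sum_rows hP hc hp, Nat.cast_sum]
    exact Finset.sum_le_sum fun k _ => sub_sub_one_le_card_Ioo_floor_ceil _ _
  have hcard : ((Finset.Ioo 0 p).card : ℝ) = p - 1 := by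
    rw [Nat.card_Ioo, Nat.sub_zero, Nat.cast_pred hp0]
  rw [sum_Icc_eq_add_sum_Ioo_add _ hp0, Finset.sum_add_distrib, Finset.sum_const, nsmul_one,
    hcard] at htotal
  rw [Finset.sum_sub_distrib, Finset.sum_const, nsmul_one, hcard] at hinterior
  rw [sum_range_add_succ (fun k => rowLength P k) hp0]
  simp only [Nat.cast_zero] at htotal ⊢
  linarith

lemma mul_rowLength_add_le_sum (hP : IsCompact P) (hc : Convex ℝ P)
    (hp : Prod.snd '' P = Set.Icc (0 : ℝ) p) :
    p * (rowLength P 0 + rowLength P p) ≤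
      ∑ k ∈ Finset.range p, (rowLength P k + rowLength P (k + 1 : ℕ)) := by
  have hw : ConcaveOn ℝ (Set.Icc ((0 : ℕ) : ℝ) p) (rowLength P) := by
    rw [Nat.cast_zero, ← hp]
    exact (concaveOn_rowRight hP hc).sub (convexOn_rowLeft hP hc)
  simpa using mul_add_le_sum_Ico_of_concaveOn p.zero_le hw

lemma mul_sub_le_sum_rowLength_of_segment (hP : IsCompact P) (hc : Convex ℝ P)
    (hp : Prod.snd '' P = Set.Icc (0 : ℝ) p) {a β : ℝ}
    (ha : a ∈ Set.Icc (rowLeft P 0) (rowRight P 0))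
    (hb : a + β * p ∈ Set.Icc (rowLeft P p) (rowRight P p)) {h h' : ℕ} (hh : h ≤ p) (hh' : h' ≤ p) :
    p * (rowRight P h' - rowLeft P h - β * (h' - h)) ≤
      ∑ k ∈ Finset.range p, (rowLength P k + rowLength P (k + 1 : ℕ)) := by
  have hL : ConvexOn ℝ (Set.Icc (0 : ℝ) p) (rowLeft P) := hp ▸ convexOn_rowLeft hP hc
  have hR : ConcaveOn ℝ (Set.Icc (0 : ℝ) p) (rowRight P) := hp ▸ concaveOn_rowRight hP hc
  set σ : ℝ → ℝ := fun y => a + β * y with hσ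
  have hσ_convex : ConvexOn ℝ (Set.Icc (0 : ℝ) p) σ :=
    (convexOn_const a (convex_Icc _ _)).add ((LinearMap.mulLeft ℝ _).convexOn (convex_Icc _ _))
  have hσ_concave : ConcaveOn ℝ (Set.Icc (0 : ℝ) p) σ :=
    (concaveOn_const a (convex_Icc _ _)).add ((LinearMap.mulLeft ℝ _).concaveOn (convex_Icc _ _))
  have hleft := mul_le_sum_range_of_concaveOn hh (hσ_concave.sub hL)
    (by simpa [hσ] using ha.1) (by simpa [hσ] using hb.1)
  have hright := mul_le_sum_range_of_concaveOn hh' (hR.sub hσ_convex)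
    (by simpa [hσ] using ha.2) (by simpa [hσ] using hb.2)
  calc p * (rowRight P h' - rowLeft P h - β * (h' - h))
      = p * (σ - rowLeft P) h + p * (rowRight P - σ) h' := by
        simp only [Pi.sub_apply, hσ]; ring
    _ ≤ _ := add_le_add hleft hright
    _ = _ := by
        rw [← Finset.sum_add_distrib]
        refine Finset.sum_congr rfl fun k _ => ?_
        simp only [Pi.sub_apply, rowLength]; ring

lemma mul_le_sum_rowLength_of_wide (hP : IsCompact P) (hc : Convex ℝ P)
    (hp : Prod.snd '' P = Set.Icc (0 : ℝ) p) (hp0 : 0 < p)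
    (hs : rowLength P 0 + rowLength P p ≤ p)
    (hwide : ∀ t : ℤ, ∃ z z' : ℤ × ℤ, toR2 z ∈ P ∧ toR2 z' ∈ P ∧
      (p : ℤ) ≤ (z'.1 - t * z'.2) - (z.1 - t * z.2)) :
    p * (p + (rowLength P 0 + rowLength P p)) / 2 ≤
      ∑ k ∈ Finset.range p, (rowLength P k + rowLength P (k + 1 : ℕ)) := by
  have hp0' : (0 : ℝ) < p := Nat.cast_pos.2 hp0
  have hrow {y : ℝ} (hy : y ∈ Set.Icc (0 : ℝ) p) : rowLeft P y ≤ rowRight P y :=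
    rowLeft_le_rowRight hP (hp ▸ hy)
  have hheight {z : ℤ × ℤ} (hz : toR2 z ∈ P) : ∃ h : ℕ, z.2 = h ∧ h ≤ p := by
    have hmem : (z.2 : ℝ) ∈ Set.Icc (0 : ℝ) p := hp ▸ ⟨_, hz, rfl⟩
    lift z.2 to ℕ using by exact_mod_cast hmem.1 with h
    exact ⟨h, rfl, by exact_mod_cast hmem.2⟩
  obtain ⟨t, a, ha, b, hb, hslope⟩ := exists_int_abs_sub_sub_mul_le
    (hrow (y := 0) (by simp)) (hrow (y := p) (by simp)) hp0' hs
  rw [← rowLength, ← rowLength] at hslope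
  obtain ⟨⟨x, y⟩, ⟨x', y'⟩, hz, hz', hle⟩ := hwide t
  obtain ⟨h, rfl, hh⟩ := hheight hz
  obtain ⟨h', rfl, hh'⟩ := hheight hz'
  have hle' : (p : ℝ) ≤ (x' - t * h') - (x - t * h) := by exact_mod_cast hle
  have hheights : |(h' : ℝ) - h| ≤ p := by
    rw [abs_le]
    constructor <;> linarith [h.cast_nonneg (α := ℝ), h'.cast_nonneg (α := ℝ),
      Nat.cast_le (α := ℝ).2 hh, Nat.cast_le (α := ℝ).2 hh']
  have herror : (b - a - t * p) * (h' - h) ≤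
      (p - (rowLength P 0 + rowLength P p)) / 2 * p :=
    (le_abs_self _).trans <| by rw [abs_mul]; gcongr
  have hx : rowLeft P h ≤ x := by exact_mod_cast rowLeft_le hP hz
  have hx' : x' ≤ rowRight P h' := by exact_mod_cast le_rowRight hP hz'
  have hb' : a + (b - a) / p * p = b := by field_simp; ring
  refine le_trans ?_ (mul_sub_le_sum_rowLength_of_segment hP hc hp ha (hb'.symm ▸ hb) hh hh')
  calc p * (p + (rowLength P 0 + rowLength P p)) / 2
      ≤ p * p - (b - a - t * p) * (h' - h) := by linarith
    _ ≤ p * ((x' - t * h') - (x - t * h)) - (b - a - t * p) * (h' - h) := by gcongr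
    _ = p * (x' - x - (b - a) / p * (h' - h)) := by field_simp; ring
    _ ≤ _ := by gcongr

lemma bcount_le_of_wide (hP : IsCompact P) (hc : Convex ℝ P)
    (hp : Prod.snd '' P = Set.Icc (0 : ℝ) p) (hi : 0 < icount P)
    (hwide : ∀ t : ℤ, ∃ z z' : ℤ × ℤ, toR2 z ∈ P ∧ toR2 z' ∈ P ∧
      (p : ℤ) ≤ (z'.1 - t * z'.2) - (z.1 - t * z.2)) :
    bcount P ≤ 2 * icount P + 6 ∨ (bcount P = 9 ∧ icount P = 1) := by
  have hp2 : 2 ≤ p := by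
    rw [icount_eq_sum_rows hP hc hp] at hi
    obtain ⟨k, hk, -⟩ := Finset.exists_ne_zero_of_sum_ne_zero hi.ne'
    have := Finset.mem_Ioo.1 hk
    omega
  have hs : 0 ≤ rowLength P 0 + rowLength P p :=
    add_nonneg (sub_nonneg.2 (rowLeft_le_rowRight hP (hp ▸ by simp)))
      (sub_nonneg.2 (rowLeft_le_rowRight hP (hp ▸ by simp)))
  have hb := bcount_le_rowLength_add hP hc hp (by omega)
  have hbi := bcount_sub_two_mul_icount_le hP hc hp (by omega)
  have htrapezoid := mul_rowLength_add_le_sum hP hc hp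
  set s := rowLength P 0 + rowLength P p
  have h6 (h : (bcount P : ℝ) - 2 * icount P ≤ 6) : bcount P ≤ 2 * icount P + 6 := by
    have : (bcount P : ℝ) ≤ 2 * icount P + 6 := by linarith
    exact_mod_cast this
  have hp2' : (2 : ℝ) ≤ p := by exact_mod_cast hp2
  rcases le_or_gt 4 s with hs4 | hs4
  · exact Or.inl (h6 (by linarith [mul_nonneg (sub_nonneg.2 hp2') (sub_nonneg.2 hs4)]))
  rcases (by omega : p = 2 ∨ p = 3 ∨ 4 ≤ p) with rfl | rfl | hp4
  · exact Or.inl (h6 (by push_cast at *; linarith))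
  · have : bcount P < 10 := by
      have : (bcount P : ℝ) < 10 := by push_cast at hb; linarith
      exact_mod_cast this
    omega
  · have hp4' : (4 : ℝ) ≤ p := by exact_mod_cast hp4
    have hwide_sum := mul_le_sum_rowLength_of_wide hP hc hp (by omega) (by linarith) hwide
    exact Or.inl (h6 (by linarith [mul_nonneg (sub_nonneg.2 hp4') hs, sq_nonneg ((p : ℝ) - 4)]))

end UpperBound

section NormalForm

/-- The convex hull in the plane of a finite set of lattice points. -/
def latticeHull (S : Finset (ℤ × ℤ)) : Set (ℝ × ℝ) := convexHull ℝ (toR2 '' (S : Set (ℤ × ℤ)))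

/-- The difference between the largest and the smallest second coordinate of a point of `S`, with
value `0` for the empty set. -/
def verticalExtent (S : Finset (ℤ × ℤ)) : ℕ := (S ×ˢ S).sup fun q => (q.2.2 - q.1.2).toNat

/-- The unimodular map exchanging the coordinates after the horizontal shear of slope `t`: the
height of the image of `z` is `z.1 - t * z.2`. -/
def shearSwap {R : Type*} [CommRing R] (t : R) : (R × R) ≃ₗ[R] (R × R) where
  toFun z := (z.2, z.1 - t * z.2)
  invFun z := (z.2 + t * z.1, z.1)
  map_add' z w := by ext <;> simp; ring
  map_smul' c z := by ext <;> simp; ring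
  left_inv z := by simp
  right_inv z := by simp

variable {S : Finset (ℤ × ℤ)} {z w : ℤ × ℤ}

lemma isCompact_latticeHull (S : Finset (ℤ × ℤ)) : IsCompact (latticeHull S) :=
  (S.finite_toSet.image toR2).isCompact_convexHull ℝ

lemma convex_latticeHull (S : Finset (ℤ × ℤ)) : Convex ℝ (latticeHull S) := convex_convexHull ℝ _

lemma toR2_mem_latticeHull (hz : z ∈ S) : toR2 z ∈ latticeHull S :=
  subset_convexHull ℝ _ ⟨z, hz, rfl⟩

lemma snd_image_latticeHull {p : ℕ} (h : ∀ z ∈ S, 0 ≤ z.2 ∧ z.2 ≤ p)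
    (hbottom : ∃ z ∈ S, z.2 = 0) (htop : ∃ z ∈ S, z.2 = p) :
    Prod.snd '' latticeHull S = Set.Icc (0 : ℝ) p := by
  have himage : Prod.snd '' latticeHull S =
      convexHull ℝ ((fun z : ℤ × ℤ => (z.2 : ℝ)) '' (S : Set (ℤ × ℤ))) := by
    rw [latticeHull, ← LinearMap.coe_snd (R := ℝ), LinearMap.image_convexHull, Set.image_image]
    rfl
  obtain ⟨z, hz, hz0⟩ := hbottom
  obtain ⟨w, hw, hwp⟩ := htop
  rw [himage]
  refine (convexHull_min ?_ (convex_Icc _ _)).antisymm ?_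
  · rintro _ ⟨u, hu, rfl⟩
    exact ⟨Int.cast_nonneg (h u hu).1, by simpa using Int.cast_le (R := ℝ).2 (h u hu).2⟩
  · rw [← segment_eq_Icc p.cast_nonneg]
    exact segment_subset_convexHull ⟨z, hz, by simp [hz0]⟩ ⟨w, hw, by simp [hwp]⟩

section Invariance

variable {e : ℤ × ℤ ≃ ℤ × ℤ} {φ : (ℝ × ℝ) ≃ᴬ[ℝ] (ℝ × ℝ)}

lemma ncard_setOf_toR2_mem_image (h : ∀ z, φ (toR2 z) = toR2 (e z)) (A : Set (ℝ × ℝ)) :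
    {z | toR2 z ∈ φ '' A}.ncard = {z | toR2 z ∈ A}.ncard := by
  have himage : {z | toR2 z ∈ φ '' A} = e '' {z | toR2 z ∈ A} := by
    ext z
    constructor
    · rintro ⟨x, hx, hxz⟩
      have hx_eq : x = toR2 (e.symm z) := φ.injective (by rw [hxz, h, e.apply_symm_apply])
      exact ⟨e.symm z, show toR2 _ ∈ A from hx_eq ▸ hx, e.apply_symm_apply z⟩
    · rintro ⟨w, hw, rfl⟩
      exact ⟨toR2 w, hw, h w⟩
  rw [himage, Set.ncard_image_of_injective _ e.injective]

lemma latticeHull_map (h : ∀ z, φ (toR2 z) = toR2 (e z)) (S : Finset (ℤ × ℤ)) :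
    latticeHull (S.map e.toEmbedding) = φ '' latticeHull S := by
  rw [latticeHull, latticeHull, Finset.coe_map, Set.image_image]
  refine .trans ?_ (φ.toAffineEquiv.toAffineMap.image_convexHull _).symm
  rw [Set.image_image]
  simp [h]

lemma bcount_latticeHull_map (h : ∀ z, φ (toR2 z) = toR2 (e z)) (S : Finset (ℤ × ℤ)) :
    bcount (latticeHull (S.map e.toEmbedding)) = bcount (latticeHull S) := by
  have himage : φ '' frontier (latticeHull S) = frontier (φ '' latticeHull S) :=
    φ.toHomeomorph.image_frontier (latticeHull S)
  rw [bcount, latticeHull_map h, ← himage, ncard_setOf_toR2_mem_image h, bcount]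

lemma icount_latticeHull_map (h : ∀ z, φ (toR2 z) = toR2 (e z)) (S : Finset (ℤ × ℤ)) :
    icount (latticeHull (S.map e.toEmbedding)) = icount (latticeHull S) := by
  have himage : φ '' interior (latticeHull S) = interior (φ '' latticeHull S) :=
    φ.toHomeomorph.image_interior (latticeHull S)
  rw [icount, latticeHull_map h, ← himage, ncard_setOf_toR2_mem_image h, icount]

end Invariance

lemma sub_le_verticalExtent (hz : z ∈ S) (hw : w ∈ S) : w.2 - z.2 ≤ verticalExtent S :=
  Int.toNat_le.1 (Finset.le_sup (f := fun q : (ℤ × ℤ) × (ℤ × ℤ) => (q.2.2 - q.1.2).toNat)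
    (Finset.mk_mem_product hz hw))

lemma exists_sub_eq_verticalExtent (hS : S.Nonempty) :
    ∃ z ∈ S, ∃ w ∈ S, w.2 - z.2 = verticalExtent S := by
  obtain ⟨⟨z, w⟩, hq, hsup⟩ := Finset.exists_mem_eq_sup (S ×ˢ S) (hS.product hS)
    fun q => (q.2.2 - q.1.2).toNat
  obtain ⟨hz, hw⟩ := Finset.mem_product.1 hq
  rw [verticalExtent, hsup]
  rcases le_total z.2 w.2 with h | h
  · exact ⟨z, hz, w, hw, by simp [h]⟩
  · exact ⟨z, hz, z, hz, by simp [h]⟩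

lemma exists_sub_eq_verticalExtent_map_shearSwap (hS : S.Nonempty) (t : ℤ) :
    ∃ z ∈ S, ∃ w ∈ S, (w.1 - t * w.2) - (z.1 - t * z.2) =
      verticalExtent (S.map (shearSwap t).toEquiv.toEmbedding) := by
  obtain ⟨_, hz, _, hw, hzw⟩ :=
    exists_sub_eq_verticalExtent (hS.map (f := (shearSwap t).toEquiv.toEmbedding))
  obtain ⟨z, hzS, rfl⟩ := Finset.mem_map.1 hz
  obtain ⟨w, hwS, rfl⟩ := Finset.mem_map.1 hw
  exact ⟨z, hzS, w, hwS, hzw⟩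

lemma exists_forall_verticalExtent_le_map_shearSwap (hS : S.Nonempty) :
    ∃ T : Finset (ℤ × ℤ), T.Nonempty ∧ bcount (latticeHull T) = bcount (latticeHull S) ∧
      icount (latticeHull T) = icount (latticeHull S) ∧
      ∀ t : ℤ, verticalExtent T ≤ verticalExtent (T.map (shearSwap t).toEquiv.toEmbedding) := by
  obtain ⟨T, ⟨hT, hb, hi⟩, hmin⟩ := exists_minimalFor_of_wellFoundedLT
    (fun T : Finset (ℤ × ℤ) => T.Nonempty ∧ bcount (latticeHull T) = bcount (latticeHull S) ∧
      icount (latticeHull T) = icount (latticeHull S)) verticalExtent ⟨S, hS, rfl, rfl⟩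
  have hshear (t : ℤ) (z : ℤ × ℤ) :
      (shearSwap (t : ℝ)).toContinuousLinearEquiv.toContinuousAffineEquiv (toR2 z) =
        toR2 ((shearSwap t).toEquiv z) := by
    simp [toR2, shearSwap]
  exact ⟨T, hT, hb, hi, fun t => (le_total _ _).elim (hmin ⟨hT.map,
    (bcount_latticeHull_map (hshear t) T).trans hb,
    (icount_latticeHull_map (hshear t) T).trans hi⟩) id⟩

lemma exists_latticeHull_snd_image_eq_Icc_and_wide (hS : S.Nonempty) :
    ∃ (T : Finset (ℤ × ℤ)) (p : ℕ), bcount (latticeHull T) = bcount (latticeHull S) ∧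
      icount (latticeHull T) = icount (latticeHull S) ∧
      Prod.snd '' latticeHull T = Set.Icc (0 : ℝ) p ∧
      ∀ t : ℤ, ∃ z z' : ℤ × ℤ, toR2 z ∈ latticeHull T ∧ toR2 z' ∈ latticeHull T ∧
        (p : ℤ) ≤ (z'.1 - t * z'.2) - (z.1 - t * z.2) := by
  obtain ⟨T, hT, hb, hi, hmin⟩ := exists_forall_verticalExtent_le_map_shearSwap hS
  obtain ⟨z₀, hz₀, w₀, hw₀, hp⟩ := exists_sub_eq_verticalExtent hT
  have htranslate (z : ℤ × ℤ) :
      ContinuousAffineEquiv.constVAdd ℝ (ℝ × ℝ) (toR2 (-z₀)) (toR2 z) =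
        toR2 (Equiv.addLeft (-z₀) z) :=
    calc _ = toR2 (-z₀) + toR2 z := rfl
      _ = _ := by simp [toR2]
  have hmem {z : ℤ × ℤ} (hz : z ∈ T) : z - z₀ ∈ T.map (Equiv.addLeft (-z₀)).toEmbedding := by
    simpa [sub_eq_neg_add] using hz
  refine ⟨T.map (Equiv.addLeft (-z₀)).toEmbedding, verticalExtent T,
    (bcount_latticeHull_map htranslate T).trans hb,
    (icount_latticeHull_map htranslate T).trans hi, ?_, fun t => ?_⟩
  · refine snd_image_latticeHull ?_ ⟨_, hmem hz₀, by simp⟩ ⟨_, hmem hw₀, by simpa using hp⟩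
    simp only [Finset.forall_mem_map]
    intro z hz
    have := sub_le_verticalExtent hz hw₀
    have := sub_le_verticalExtent hz₀ hz
    rw [Equiv.coe_toEmbedding, Equiv.coe_addLeft, Prod.snd_add, Prod.snd_neg]
    omega
  · obtain ⟨z, hz, w, hw, hzw⟩ := exists_sub_eq_verticalExtent_map_shearSwap hT t
    refine ⟨_, _, toR2_mem_latticeHull (hmem hz), toR2_mem_latticeHull (hmem hw), ?_⟩
    rw [Prod.fst_sub, Prod.snd_sub, Prod.fst_sub, Prod.snd_sub]
    linarith [Int.ofNat_le.2 (hmin t)]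

end NormalForm

section BoundaryPoints

lemma finrank_add_one_le_ncard_of_affineSpan_eq_top {K V Q : Type*} [DivisionRing K]
    [AddCommGroup V] [Module K V] [AddTorsor V Q] {B : Set Q} (hB : B.Finite)
    (hspan : affineSpan K B = ⊤) : Module.finrank K V + 1 ≤ B.ncard := by
  have : Fintype B := hB.fintype
  have : Nonempty B :=
    ((affineSpan_nonempty K).1 (by rw [hspan]; exact Set.univ_nonempty)).to_subtype
  have h := finrank_vectorSpan_range_add_one_le K (Subtype.val : B → Q)
  rwa [Subtype.range_coe, ← direction_affineSpan, hspan, AffineSubspace.direction_top,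
    finrank_top, ← Nat.card_eq_fintype_card] at h

lemma extremePoints_latticeHull_subset (S : Finset (ℤ × ℤ)) :
    (latticeHull S).extremePoints ℝ ⊆ toR2 '' {z | toR2 z ∈ frontier (latticeHull S)} := by
  intro x hx
  obtain ⟨z, -, rfl⟩ := extremePoints_convexHull_subset hx
  exact ⟨z, ⟨subset_closure hx.1,
    fun h => Set.disjoint_left.1 (disjoint_interior_extremePoints _) h hx⟩, rfl⟩

lemma three_le_bcount_latticeHull {S : Finset (ℤ × ℤ)}
    (hspan : affineSpan ℝ (latticeHull S) = ⊤) : 3 ≤ bcount (latticeHull S) := by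
  set B : Set (ℤ × ℤ) := {z | toR2 z ∈ frontier (latticeHull S)}
  have hcompact := isCompact_latticeHull S
  have hfin : B.Finite := (finite_setOf_toR2_mem hcompact).subset
    (Set.preimage_mono hcompact.isClosed.frontier_subset)
  have hsub : latticeHull S ⊆ convexHull ℝ (toR2 '' B) :=
    (closure_convexHull_extremePoints hcompact (convex_latticeHull S)).symm.subset.trans
      (closure_minimal (convexHull_mono (extremePoints_latticeHull_subset S))
        ((hfin.image toR2).isCompact_convexHull ℝ).isClosed)
  have hspanB : affineSpan ℝ (toR2 '' B) = ⊤ := by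
    rw [← affineSpan_convexHull, eq_top_iff, ← hspan]
    exact affineSpan_mono ℝ hsub
  calc 3 = Module.finrank ℝ (ℝ × ℝ) + 1 := by simp
    _ ≤ (toR2 '' B).ncard := finrank_add_one_le_ncard_of_affineSpan_eq_top (hfin.image _) hspanB
    _ ≤ bcount (latticeHull S) := Set.ncard_image_le hfin

lemma bcount_latticeHull_le {S : Finset (ℤ × ℤ)} (hi : 0 < icount (latticeHull S)) :
    bcount (latticeHull S) ≤ 2 * icount (latticeHull S) + 6 ∨
      (bcount (latticeHull S) = 9 ∧ icount (latticeHull S) = 1) := by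
  have hS : S.Nonempty := by
    rw [Finset.nonempty_iff_ne_empty]
    rintro rfl
    simp [icount, latticeHull] at hi
  obtain ⟨T, p, hb, hiT, hp, hwide⟩ := exists_latticeHull_snd_image_eq_Icc_and_wide hS
  rw [← hb, ← hiT]
  exact bcount_le_of_wide (isCompact_latticeHull T) (convex_latticeHull T) hp (hiT ▸ hi) hwide

end BoundaryPoints

section Constructions

variable {S : Finset (ℤ × ℤ)} {x y : ℝ}

lemma latticeHull_le (a b c : ℝ) (h : ∀ w ∈ S, a * w.1 + b * w.2 ≤ c) {z : ℝ × ℝ}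
    (hz : z ∈ latticeHull S) : a * z.1 + b * z.2 ≤ c := by
  have hconvex : Convex ℝ {z : ℝ × ℝ | a * z.1 + b * z.2 ≤ c} :=
    convex_halfSpace_le (f := fun z : ℝ × ℝ => a * z.1 + b * z.2)
      ((a • LinearMap.fst ℝ ℝ ℝ + b • LinearMap.snd ℝ ℝ ℝ).isLinear) c
  refine convexHull_min ?_ hconvex hz
  rintro _ ⟨w, hw, rfl⟩
  exact h w hw

lemma rowLeft_latticeHull (hx : (x, y) ∈ latticeHull S) (β : ℝ)
    (h : ∀ w ∈ S, x + β * (w.2 - y) ≤ w.1) : rowLeft (latticeHull S) y = x := by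
  refine rowLeft_eq hx fun z hz hzy => ?_
  have := latticeHull_le (-1) β (β * y - x) (fun w hw => by linarith [h w hw]) hz
  rw [hzy] at this
  linarith

lemma rowRight_latticeHull (hx : (x, y) ∈ latticeHull S) (β : ℝ)
    (h : ∀ w ∈ S, w.1 ≤ x + β * (w.2 - y)) : rowRight (latticeHull S) y = x := by
  refine rowRight_eq hx fun z hz hzy => ?_
  have := latticeHull_le 1 (-β) (x - β * y) (fun w hw => by linarith [h w hw]) hz
  rw [hzy] at this
  linarith

lemma isLatticePolygon_latticeHull (h : (interior (latticeHull S)).Nonempty) :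
    IsLatticePolygon (latticeHull S) :=
  ⟨S, rfl, (convex_latticeHull S).interior_nonempty_iff_affineSpan_eq_top.1 h⟩

lemma isLatticePolygon_latticeHull_of_icount_pos (h : 0 < icount (latticeHull S)) :
    IsLatticePolygon (latticeHull S) := by
  obtain ⟨z, hz⟩ := Set.nonempty_of_ncard_ne_zero h.ne'
  exact isLatticePolygon_latticeHull ⟨toR2 z, hz⟩

lemma mem_latticeHull_of_toR2_eq {z : ℤ × ℤ} (hz : z ∈ S) (h : toR2 z = (x, y)) :
    (x, y) ∈ latticeHull S :=
  h ▸ toR2_mem_latticeHull hz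

lemma exists_isLatticePolygon_icount_eq_zero {b : ℕ} (hb : 3 ≤ b) :
    ∃ P, IsLatticePolygon P ∧ bcount P = b ∧ icount P = 0 := by
  obtain ⟨m, hm, rfl⟩ : ∃ m, 0 < m ∧ b = m + 2 := ⟨b - 2, by omega⟩
  have hm' : (0 : ℝ) < m := Nat.cast_pos.2 hm
  set S : Finset (ℤ × ℤ) := {(0, 0), ((m : ℤ), 0), (0, 1)}
  have hP := isCompact_latticeHull S
  have hc := convex_latticeHull S
  have h00 : ((0 : ℝ), (0 : ℝ)) ∈ latticeHull S :=
    mem_latticeHull_of_toR2_eq (z := (0, 0)) (by simp [S]) (by simp [toR2])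
  have hm0 : ((m : ℝ), (0 : ℝ)) ∈ latticeHull S :=
    mem_latticeHull_of_toR2_eq (z := (m, 0)) (by simp [S]) (by simp [toR2])
  have h01 : ((0 : ℝ), (1 : ℝ)) ∈ latticeHull S :=
    mem_latticeHull_of_toR2_eq (z := (0, 1)) (by simp [S]) (by simp [toR2])
  have hp : Prod.snd '' latticeHull S = Set.Icc (0 : ℝ) (1 : ℕ) :=
    snd_image_latticeHull (by simp [S]) (by simp [S]) (by simp [S])
  have hL0 := rowLeft_latticeHull h00 0 (by simp [S])
  have hR0 := rowRight_latticeHull hm0 0 (by simp [S])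
  have hL1 := rowLeft_latticeHull h01 0 (by simp [S])
  have hR1 := rowRight_latticeHull h01 (-m) (by simp [S])
  have hinterior : ((m / 4 : ℝ), (1 / 2 : ℝ)) ∈ interior (latticeHull S) := by
    have hl : rowLeft (latticeHull S) (1 / 2) ≤ 0 :=
      rowLeft_le hP (by simpa [midpoint_eq_smul_add] using hc.midpoint_mem h00 h01)
    have hr : m / 2 ≤ rowRight (latticeHull S) (1 / 2) :=
      le_rowRight hP (by simpa [midpoint_eq_smul_add, div_eq_inv_mul] using hc.midpoint_mem hm0 h01)
    rw [mem_interior_iff_mem_Ioo_rows hP hc, hp, interior_Icc]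
    exact ⟨by norm_num, by linarith, by linarith⟩
  have hi : icount (latticeHull S) = 0 := by
    rw [icount_eq_sum_rows hP hc hp]
    rfl
  have hb : bcount (latticeHull S) + icount (latticeHull S) = m + 2 := by
    rw [bcount_add_icount_eq_sum_rows hP hc hp]
    simp [Finset.sum_Icc_succ_top, hL0, hR0, hL1, hR1]
  exact ⟨_, isLatticePolygon_latticeHull ⟨_, hinterior⟩, by omega, hi⟩

lemma exists_isLatticePolygon_of_four_le {b i : ℕ} (hi : 1 ≤ i) (hb : 4 ≤ b)
    (hbi : b ≤ 2 * i + 6) : ∃ P, IsLatticePolygon P ∧ bcount P = b ∧ icount P = i := by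
  obtain ⟨m, rfl⟩ := Nat.exists_eq_add_of_le' hb
  obtain ⟨n, hn, rfl⟩ : ∃ n, 2 ≤ n ∧ i = n - 1 := ⟨i + 1, by omega⟩
  have hmn : (m : ℝ) ≤ 2 * n := by exact_mod_cast (by omega : m ≤ 2 * n)
  set S : Finset (ℤ × ℤ) := {(0, 0), ((m : ℤ), 0), (0, 1), ((n : ℤ), 1), (0, 2)}
  have hP := isCompact_latticeHull S
  have hc := convex_latticeHull S
  have h00 : ((0 : ℝ), (0 : ℝ)) ∈ latticeHull S :=
    mem_latticeHull_of_toR2_eq (z := (0, 0)) (by simp [S]) (by simp [toR2])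
  have hm0 : ((m : ℝ), (0 : ℝ)) ∈ latticeHull S :=
    mem_latticeHull_of_toR2_eq (z := (m, 0)) (by simp [S]) (by simp [toR2])
  have h01 : ((0 : ℝ), (1 : ℝ)) ∈ latticeHull S :=
    mem_latticeHull_of_toR2_eq (z := (0, 1)) (by simp [S]) (by simp [toR2])
  have hn1 : ((n : ℝ), (1 : ℝ)) ∈ latticeHull S :=
    mem_latticeHull_of_toR2_eq (z := (n, 1)) (by simp [S]) (by simp [toR2])
  have h02 : ((0 : ℝ), (2 : ℝ)) ∈ latticeHull S :=
    mem_latticeHull_of_toR2_eq (z := (0, 2)) (by simp [S]) (by simp [toR2])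
  have hp : Prod.snd '' latticeHull S = Set.Icc (0 : ℝ) (2 : ℕ) :=
    snd_image_latticeHull (by simp [S]) (by simp [S]) (by simp [S])
  have hL0 := rowLeft_latticeHull h00 0 (by simp [S])
  have hR0 := rowRight_latticeHull hm0 (n - m) (by simp [S]; grind)
  have hL1 := rowLeft_latticeHull h01 0 (by simp [S])
  have hR1 := rowRight_latticeHull hn1 (-n) (by simp [S]; grind)
  have hL2 := rowLeft_latticeHull h02 0 (by simp [S])
  have hR2 := rowRight_latticeHull h02 (-n) (by simp [S]; grind)
  have hi : icount (latticeHull S) = n - 1 := by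
    rw [icount_eq_sum_rows hP hc hp, show Finset.Ioo 0 2 = {1} from rfl]
    simp [hL1, hR1]
  have hb : bcount (latticeHull S) + icount (latticeHull S) = (m + 1) + (n + 1) + 1 := by
    rw [bcount_add_icount_eq_sum_rows hP hc hp]
    simp [Finset.sum_Icc_succ_top, hL0, hR0, hL1, hR1, hL2, hR2]
  exact ⟨_, isLatticePolygon_latticeHull_of_icount_pos (by omega), by omega, hi⟩

lemma exists_isLatticePolygon_bcount_eq_three {i : ℕ} (hi : 1 ≤ i) :
    ∃ P, IsLatticePolygon P ∧ bcount P = 3 ∧ icount P = i := by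
  obtain ⟨n, hn, rfl⟩ : ∃ n, 2 ≤ n ∧ i = n - 1 := ⟨i + 1, by omega⟩
  have hn' : (2 : ℝ) ≤ n := by exact_mod_cast hn
  set S : Finset (ℤ × ℤ) := {(0, 0), ((n : ℤ), 1), (1, 2)}
  have hP := isCompact_latticeHull S
  have hc := convex_latticeHull S
  have h00 : ((0 : ℝ), (0 : ℝ)) ∈ latticeHull S :=
    mem_latticeHull_of_toR2_eq (z := (0, 0)) (by simp [S]) (by simp [toR2])
  have hn1 : ((n : ℝ), (1 : ℝ)) ∈ latticeHull S :=
    mem_latticeHull_of_toR2_eq (z := (n, 1)) (by simp [S]) (by simp [toR2])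
  have h12 : ((1 : ℝ), (2 : ℝ)) ∈ latticeHull S :=
    mem_latticeHull_of_toR2_eq (z := (1, 2)) (by simp [S]) (by simp [toR2])
  have hhalf : ((1 / 2 : ℝ), (1 : ℝ)) ∈ latticeHull S := by
    simpa [midpoint_eq_smul_add] using hc.midpoint_mem h00 h12
  have hp : Prod.snd '' latticeHull S = Set.Icc (0 : ℝ) (2 : ℕ) :=
    snd_image_latticeHull (by simp [S]) (by simp [S]) (by simp [S])
  have hL0 := rowLeft_latticeHull h00 0 (by simp [S])
  have hR0 := rowRight_latticeHull h00 n (by simp [S]; grind)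
  have hL1 := rowLeft_latticeHull hhalf (1 / 2) (by simp [S]; grind)
  have hR1 := rowRight_latticeHull hn1 0 (by simp [S]; grind)
  have hL2 := rowLeft_latticeHull h12 1 (by simp [S]; grind)
  have hR2 := rowRight_latticeHull h12 (1 - n) (by simp [S]; grind)
  have hfloor : ⌊(2⁻¹ : ℝ)⌋ = 0 := by norm_num
  have hceil : ⌈(2⁻¹ : ℝ)⌉ = 1 := by norm_num [Int.ceil_eq_iff]
  have hi : icount (latticeHull S) = n - 1 := by
    rw [icount_eq_sum_rows hP hc hp, show Finset.Ioo 0 2 = {1} from rfl]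
    simp [hL1, hR1, hfloor]
  have hb : bcount (latticeHull S) + icount (latticeHull S) = 1 + n + 1 := by
    rw [bcount_add_icount_eq_sum_rows hP hc hp]
    simp [Finset.sum_Icc_succ_top, hL0, hR0, hL1, hR1, hL2, hR2, hceil]
  exact ⟨_, isLatticePolygon_latticeHull_of_icount_pos (by omega), by omega, hi⟩

lemma exists_isLatticePolygon_nine_one :
    ∃ P, IsLatticePolygon P ∧ bcount P = 9 ∧ icount P = 1 := by
  set S : Finset (ℤ × ℤ) := {(0, 0), (3, 0), (0, 1), (2, 1), (0, 2), (1, 2), (0, 3)}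
  have hP := isCompact_latticeHull S
  have hc := convex_latticeHull S
  have hp : Prod.snd '' latticeHull S = Set.Icc (0 : ℝ) (3 : ℕ) :=
    snd_image_latticeHull (by simp [S]) (by simp [S]) (by simp [S])
  have hrows : ∀ k : ℕ, k ≤ 3 → (0, (k : ℤ)) ∈ S ∧ (3 - (k : ℤ), (k : ℤ)) ∈ S := by
    intro k hk
    interval_cases k <;> simp [S]
  have hL : ∀ k : ℕ, k ≤ 3 → rowLeft (latticeHull S) k = (0 : ℤ) := fun k hk =>
    rowLeft_latticeHull (mem_latticeHull_of_toR2_eq (hrows k hk).1 rfl) 0 (by simp [S])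
  have hR : ∀ k : ℕ, k ≤ 3 → rowRight (latticeHull S) k = (3 - (k : ℤ) : ℤ) := fun k hk =>
    rowRight_latticeHull (mem_latticeHull_of_toR2_eq (hrows k hk).2 rfl) (-1) (by norm_num [S])
  have hi : icount (latticeHull S) = 1 := by
    rw [icount_eq_sum_rows hP hc hp]
    refine (Finset.sum_congr rfl fun k hk => ?_).trans
      (rfl : ∑ k ∈ Finset.Ioo (0 : ℕ) 3, (Finset.Ioo (0 : ℤ) (3 - (k : ℤ))).card = 1)
    have hk3 := (Finset.mem_Ioo.1 hk).2.le
    rw [hL k hk3, hR k hk3, Int.floor_intCast, Int.ceil_intCast]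
  have hb : bcount (latticeHull S) + icount (latticeHull S) = 10 := by
    rw [bcount_add_icount_eq_sum_rows hP hc hp]
    refine (Finset.sum_congr rfl fun k hk => ?_).trans
      (rfl : ∑ k ∈ Finset.Icc (0 : ℕ) 3, (Finset.Icc (0 : ℤ) (3 - (k : ℤ))).card = 10)
    have hk3 := (Finset.mem_Icc.1 hk).2
    rw [hL k hk3, hR k hk3, Int.ceil_intCast, Int.floor_intCast]
  exact ⟨_, isLatticePolygon_latticeHull_of_icount_pos (by omega), by omega, hi⟩

end Constructions

/-- Classification of the pairs `(b(P), i(P))` over lattice polygons `P`. -/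
theorem lattice_polygon_bi_classification (b i : ℕ) :
    (∃ P : Set (ℝ × ℝ), IsLatticePolygon P ∧ bcount P = b ∧ icount P = i) ↔
      (i = 0 ∧ 3 ≤ b) ∨ (1 ≤ i ∧ 3 ≤ b ∧ b ≤ 2 * i + 6) ∨ (b = 9 ∧ i = 1) := by
  constructor
  · rintro ⟨_, ⟨S, rfl, hspan⟩, rfl, rfl⟩
    have h3 := three_le_bcount_latticeHull hspan
    rcases Nat.eq_zero_or_pos (icount (latticeHull S)) with hi | hi
    · exact Or.inl ⟨hi, h3⟩
    · exact Or.inr ((bcount_latticeHull_le hi).imp (fun h => ⟨hi, h3, h⟩) id)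
  · rintro (⟨rfl, hb⟩ | ⟨hi, hb, hbi⟩ | ⟨rfl, rfl⟩)
    · exact exists_isLatticePolygon_icount_eq_zero hb
    · rcases hb.eq_or_lt with rfl | hb
      · exact exists_isLatticePolygon_bcount_eq_three hi
      · exact exists_isLatticePolygon_of_four_le hi hb hbi
    · exact exists_isLatticePolygon_nine_one
end

section
/- For every integer c ≥ 2 there is no lattice triangle T satisfying ((c−1)/2)·b(T) − (c−1) < i(T) < (c/2)·b(T) − c(c+2). -/
open MeasureTheory

/-!
Let `N` be twice the area of `T` and let `b = b(T)`, which is the sum of the lattice lengths of the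
three sides. By Pick's theorem the hypotheses become `c (b - 2) < N < (c + 1) (b - 2 - 2 c)`.
The product of any two of the side lengths divides `N`, and a common divisor of two of them
divides the third. For side lengths `x ≥ y ≥ z` the bounds force `N = x y` and `x - y < z`, and then
divisibility forces `x = y = z`, so that `b = 3 x` and `N = x ^ 2`, which the bounds exclude.
-/

/-- Twice the signed area of the triangle `a b c`. For fixed `a b c`, the values `orient z b c`,
`orient a z c` and `orient a b z` are the barycentric coordinates of `z`, scaled so that they sum
to `orient a b c`. -/
def orient {R : Type*} [CommRing R] (a b c : R × R) : R :=
  (b.1 - a.1) * (c.2 - a.2) - (b.2 - a.2) * (c.1 - a.1)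

section CommRing

variable {R : Type*} [CommRing R]

theorem orient_rotate (a b c : R × R) : orient b c a = orient a b c := by
  simp only [orient]; ring

theorem orient_swap (a b c : R × R) : orient a c b = -orient a b c := by
  simp only [orient]; ring

@[simp] theorem orient_self_right (a b : R × R) : orient a b b = 0 := by
  simp only [orient]; ring

theorem orient_add_orient_add_orient (a b c z : R × R) :
    orient z b c + orient a z c + orient a b z = orient a b c := by
  simp only [orient]; ring

theorem orient_add_smul_middle (a w c : R × R) (k : R) :
    orient a (a + k • w) c = k * orient a (a + w) c := by
  simp only [orient, Prod.fst_add, Prod.snd_add, Prod.smul_fst, Prod.smul_snd, smul_eq_mul]; ring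

theorem orient_add_sub_middle (a b c z : R × R) :
    orient a (b + c - z) c = orient a b c - orient a z c := by
  simp only [orient, Prod.fst_add, Prod.snd_add, Prod.fst_sub, Prod.snd_sub]; ring

theorem orient_add_sub_right (a b c z : R × R) :
    orient a b (b + c - z) = orient a b c - orient a b z := by
  simp only [orient, Prod.fst_add, Prod.snd_add, Prod.fst_sub, Prod.snd_sub]; ring

theorem exists_eq_add_smul_of_orient_eq_zero {a w z : R × R} (hw : IsCoprime w.1 w.2)
    (hz : orient a (a + w) z = 0) : ∃ k : R, z = a + k • w := by
  obtain ⟨r, s, hrs⟩ := hw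
  simp only [orient, Prod.fst_add, Prod.snd_add, add_sub_cancel_left] at hz
  refine ⟨r * (z.1 - a.1) + s * (z.2 - a.2), Prod.ext ?_ ?_⟩
  · simp only [Prod.fst_add, Prod.smul_fst, smul_eq_mul]
    linear_combination (a.1 - z.1) * hrs - s * hz
  · simp only [Prod.snd_add, Prod.smul_snd, smul_eq_mul]
    linear_combination (a.2 - z.2) * hrs + r * hz

theorem eq_of_orient_eq [IsDomain R] {a b c z w : R × R} (habc : orient a b c ≠ 0)
    (hb : orient a z c = orient a w c) (hc : orient a b z = orient a b w) : z = w := by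
  simp only [orient] at habc hb hc
  refine Prod.ext (mul_left_cancel₀ habc ?_) (mul_left_cancel₀ habc ?_)
  · linear_combination (b.1 - a.1) * hb + (c.1 - a.1) * hc
  · linear_combination (b.2 - a.2) * hb + (c.2 - a.2) * hc

end CommRing

section Field

variable {K : Type*} [Field K]

theorem collinear_iff_orient_eq_zero {a b c : K × K} :
    Collinear K {a, b, c} ↔ orient a b c = 0 := by
  rw [collinear_iff_of_mem (Set.mem_insert a _)]
  constructor
  · rintro ⟨v, hv⟩
    obtain ⟨r, rfl⟩ := hv b (by simp)
    obtain ⟨s, rfl⟩ := hv c (by simp)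
    simp only [orient, vadd_eq_add, Prod.fst_add, Prod.snd_add, Prod.smul_fst, Prod.smul_snd,
      smul_eq_mul]
    ring
  · intro h
    rcases eq_or_ne b a with rfl | hba
    · rw [Set.insert_eq_of_mem (Set.mem_insert _ _), ← collinear_iff_of_mem (Set.mem_insert _ _)]
      exact collinear_pair K b c
    suffices ∃ r : K, c = r • (b - a) + a by
      refine ⟨b - a, ?_⟩
      rintro p (rfl | rfl | rfl)
      · exact ⟨0, by simp⟩
      · exact ⟨1, by simp⟩
      · exact this
    simp only [orient] at h
    by_cases h1 : b.1 - a.1 = 0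
    · have h2 : b.2 - a.2 ≠ 0 := fun h2 => hba (Prod.ext (sub_eq_zero.1 h1) (sub_eq_zero.1 h2))
      refine ⟨(c.2 - a.2) / (b.2 - a.2), Prod.ext ?_ ?_⟩
      · simp only [Prod.fst_add, Prod.smul_fst, Prod.fst_sub, smul_eq_mul]
        field_simp
        linear_combination -h
      · simp [h2]
    · refine ⟨(c.1 - a.1) / (b.1 - a.1), Prod.ext ?_ ?_⟩
      · simp [h1]
      · simp only [Prod.snd_add, Prod.smul_snd, Prod.snd_sub, smul_eq_mul]
        field_simp
        linear_combination h

theorem affineIndependent_iff_orient_ne_zero {a b c : K × K} :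
    AffineIndependent K ![a, b, c] ↔ orient a b c ≠ 0 := by
  rw [affineIndependent_iff_not_collinear_set, collinear_iff_orient_eq_zero.not]

theorem exists_affineBasis_coord_mul_orient {a b c : K × K} (h : orient a b c ≠ 0) :
    ∃ B : AffineBasis (Fin 3) K (K × K), Set.range B = {a, b, c} ∧ ∀ x,
      B.coord 0 x * orient a b c = orient x b c ∧ B.coord 1 x * orient a b c = orient a x c ∧
        B.coord 2 x * orient a b c = orient a b x := by
  have hind := affineIndependent_iff_orient_ne_zero.2 h
  have hspan : affineSpan K (Set.range ![a, b, c]) = ⊤ := by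
    rw [hind.affineSpan_eq_top_iff_card_eq_finrank_add_one]
    simp
  let B : AffineBasis (Fin 3) K (K × K) := ⟨![a, b, c], hind, hspan⟩
  have hrange : Set.range B = {a, b, c} := by
    change Set.range ![a, b, c] = {a, b, c}
    rw [Matrix.range_cons, Matrix.range_cons_cons_empty, Set.singleton_union]
  refine ⟨B, hrange, fun x => ?_⟩
  have hsum := B.sum_coord_apply_eq_one x
  have hx : ∑ i, B.coord i x • ![a, b, c] i = x := B.linear_combination_coord_eq_self x
  rw [Fin.sum_univ_three] at hsum hx
  have hx₁ := congrArg Prod.fst hx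
  have hx₂ := congrArg Prod.snd hx
  simp only [Matrix.cons_val, Prod.fst_add, Prod.snd_add, Prod.smul_fst, Prod.smul_snd,
    smul_eq_mul] at hx₁ hx₂
  simp only [orient, ← hx₁, ← hx₂]
  refine ⟨?_, ?_, ?_⟩
  · linear_combination (b.1 * c.2 - b.2 * c.1) * hsum
  · linear_combination (c.1 * a.2 - c.2 * a.1) * hsum
  · linear_combination (a.1 * b.2 - a.2 * b.1) * hsum

end Field

section Real

variable {a b c : ℝ × ℝ}

theorem mem_convexHull_iff_orient_nonneg (h : 0 < orient a b c) (x : ℝ × ℝ) :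
    x ∈ convexHull ℝ {a, b, c} ↔ 0 ≤ orient x b c ∧ 0 ≤ orient a x c ∧ 0 ≤ orient a b x := by
  obtain ⟨B, hrange, hcoord⟩ := exists_affineBasis_coord_mul_orient h.ne'
  obtain ⟨h₀, h₁, h₂⟩ := hcoord x
  rw [← hrange, B.convexHull_eq_nonneg_coord]
  simp [Fin.forall_fin_succ, ← h₀, ← h₁, ← h₂, mul_nonneg_iff_of_pos_right h]

theorem mem_interior_convexHull_iff_orient_pos (h : 0 < orient a b c) (x : ℝ × ℝ) :
    x ∈ interior (convexHull ℝ {a, b, c}) ↔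
      0 < orient x b c ∧ 0 < orient a x c ∧ 0 < orient a b x := by
  obtain ⟨B, hrange, hcoord⟩ := exists_affineBasis_coord_mul_orient h.ne'
  obtain ⟨h₀, h₁, h₂⟩ := hcoord x
  rw [← hrange, B.interior_convexHull]
  simp [Fin.forall_fin_succ, ← h₀, ← h₁, ← h₂, mul_pos_iff_of_pos_right h]

end Real

theorem natCard_quotient_range_eq_natAbs_det {M : Type*} [AddCommGroup M] [Module.Free ℤ M]
    [Module.Finite ℤ M] (f : M →ₗ[ℤ] M) (hf : LinearMap.det f ≠ 0) :
    Nat.card (M ⧸ LinearMap.range f) = (LinearMap.det f).natAbs := by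
  have hinj : Function.Injective f := by
    rw [← LinearMap.ker_eq_bot]
    exact not_not.1 (mt LinearMap.det_eq_zero_iff_ker_ne_bot.2 hf)
  exact (Submodule.natAbs_det_equiv _ (LinearEquiv.ofInjective f hinj)).symm

section Matrix

open Matrix

variable {n : Type*} [Fintype n] [DecidableEq n] (A : Matrix n n ℤ)

/-- The half-open parallelepiped spanned by the columns of `A` is a fundamental domain for the
lattice they generate. -/
theorem bijective_mk_adjugate_mulVec_mem_Ico (hA : 0 < A.det) :
    Function.Bijective (fun z : {z : n → ℤ | ∀ i, (A.adjugate *ᵥ z) i ∈ Set.Ico 0 A.det} =>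
      (Submodule.Quotient.mk z.1 : (n → ℤ) ⧸ LinearMap.range (toLin' A))) := by
  have adj_mulVec (v : n → ℤ) : A.adjugate *ᵥ A *ᵥ v = A.det • v := by
    rw [mulVec_mulVec, adjugate_mul, smul_mulVec, one_mulVec]
  have mulVec_adj (z : n → ℤ) : A *ᵥ A.adjugate *ᵥ z = A.det • z := by
    rw [mulVec_mulVec, mul_adjugate, smul_mulVec, one_mulVec]
  constructor
  · rintro ⟨z, hz⟩ ⟨w, hw⟩ hzw
    obtain ⟨v, hv⟩ := (Submodule.Quotient.eq _).1 hzw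
    have hadj : A.adjugate *ᵥ z = A.adjugate *ᵥ w := by
      ext i
      have hi : (A.adjugate *ᵥ z) i = (A.adjugate *ᵥ w) i + A.det * v i := by
        rw [← sub_eq_iff_eq_add', ← Pi.sub_apply, ← mulVec_sub, ← hv, toLin'_apply, adj_mulVec,
          Pi.smul_apply, smul_eq_mul]
      rw [← Int.emod_eq_of_lt (hz i).1 (hz i).2, hi, Int.add_mul_emod_self_left,
        Int.emod_eq_of_lt (hw i).1 (hw i).2]
    have hdet : A.det • z = A.det • w := by rw [← mulVec_adj, hadj, mulVec_adj]
    exact Subtype.ext (smul_right_injective _ hA.ne' hdet)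
  · intro q
    obtain ⟨z, rfl⟩ := Submodule.Quotient.mk_surjective _ q
    let v : n → ℤ := fun i => (A.adjugate *ᵥ z) i / A.det
    refine ⟨⟨z - A *ᵥ v, fun i => ?_⟩, ?_⟩
    · have : (A.adjugate *ᵥ (z - A *ᵥ v)) i = (A.adjugate *ᵥ z) i % A.det := by
        rw [mulVec_sub, adj_mulVec, Int.emod_def]
        rfl
      rw [this]
      exact ⟨Int.emod_nonneg _ hA.ne', Int.emod_lt_of_pos _ hA⟩
    · exact (Submodule.Quotient.eq _).2 ⟨-v, by simp [mulVec_neg]⟩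

theorem ncard_adjugate_mulVec_mem_Ico (hA : 0 < A.det) :
    (Set.ncard {z : n → ℤ | ∀ i, (A.adjugate *ᵥ z) i ∈ Set.Ico 0 A.det} : ℤ) = A.det := by
  rw [← Nat.card_coe_set_eq, Nat.card_eq_of_bijective _ (bijective_mk_adjugate_mulVec_mem_Ico A hA),
    natCard_quotient_range_eq_natAbs_det _ ((LinearMap.det_toLin' A).symm ▸ hA.ne'),
    LinearMap.det_toLin', Int.natAbs_of_nonneg hA.le]

end Matrix

/-- The lattice points of the half-open parallelogram spanned by `b - a` and `c - a` at the
vertex `a`, the two sides not containing `a` being excluded. -/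
def halfOpenParallelogram (a b c : ℤ × ℤ) : Set (ℤ × ℤ) :=
  {z | (0 ≤ orient a z c ∧ orient a z c < orient a b c) ∧
    0 ≤ orient a b z ∧ orient a b z < orient a b c}

theorem ncard_halfOpenParallelogram {a b c : ℤ × ℤ} (h : 0 < orient a b c) :
    ((halfOpenParallelogram a b c).ncard : ℤ) = orient a b c := by
  let A : Matrix (Fin 2) (Fin 2) ℤ := !![b.1 - a.1, c.1 - a.1; b.2 - a.2, c.2 - a.2]
  have hA : A.det = orient a b c := by
    simp only [A, Matrix.det_fin_two_of, orient]; ring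
  let e : ℤ × ℤ ≃ (Fin 2 → ℤ) := (Equiv.subRight a).trans (finTwoArrowEquiv ℤ).symm
  have hcount := ncard_adjugate_mulVec_mem_Ico A (hA ▸ h)
  rw [hA, ← Set.ncard_preimage_of_injective_subset_range e.injective (by simp)] at hcount
  have hmulVec (z : ℤ × ℤ) : A.adjugate.mulVec (e z) = ![orient a z c, orient a b z] := by
    ext i
    fin_cases i <;> simp [A, e, Matrix.adjugate_fin_two, orient, Matrix.mulVec] <;> ring
  simpa only [halfOpenParallelogram, Set.preimage_ofPred_eq, hmulVec, Fin.forall_fin_two,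
    Set.mem_Ico, Matrix.cons_val_zero, Matrix.cons_val_one] using hcount

theorem finite_halfOpenParallelogram {a b c : ℤ × ℤ} (h : 0 < orient a b c) :
    (halfOpenParallelogram a b c).Finite :=
  Set.finite_of_ncard_pos (by exact_mod_cast (ncard_halfOpenParallelogram h).symm ▸ h)

/-- The lattice length of the segment from `a` to `b`: the number of primitive lattice segments
it is composed of. -/
def latticeLength (a b : ℤ × ℤ) : ℕ :=
  Int.gcd (b.1 - a.1) (b.2 - a.2)

theorem dvd_latticeLength_iff {a b : ℤ × ℤ} {d : ℤ} :
    d ∣ latticeLength a b ↔ d ∣ b.1 - a.1 ∧ d ∣ b.2 - a.2 :=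
  Int.dvd_coe_gcd_iff

theorem latticeLength_pos {a b c : ℤ × ℤ} (h : orient a b c ≠ 0) : 0 < latticeLength a b := by
  rw [latticeLength, Int.gcd_pos_iff]
  by_contra! hab
  exact h (by rw [orient, hab.1, hab.2]; ring)

theorem latticeLength_mul_latticeLength_dvd_orient (a b c : ℤ × ℤ) :
    (latticeLength a b * latticeLength b c : ℤ) ∣ orient a b c := by
  obtain ⟨hab₁, hab₂⟩ := dvd_latticeLength_iff.1 (dvd_refl (latticeLength a b : ℤ))
  obtain ⟨hbc₁, hbc₂⟩ := dvd_latticeLength_iff.1 (dvd_refl (latticeLength b c : ℤ))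
  have horient : orient a b c =
      (b.1 - a.1) * (c.2 - b.2) - (b.2 - a.2) * (c.1 - b.1) := by rw [orient]; ring
  exact horient ▸ dvd_sub (mul_dvd_mul hab₁ hbc₂) (mul_dvd_mul hab₂ hbc₁)

theorem dvd_latticeLength_trans {a b c : ℤ × ℤ} {d : ℤ} (hab : d ∣ latticeLength a b)
    (hbc : d ∣ latticeLength b c) : d ∣ latticeLength c a := by
  rw [dvd_latticeLength_iff] at *
  constructor
  · simpa using dvd_neg.2 (dvd_add hab.1 hbc.1)
  · simpa using dvd_neg.2 (dvd_add hab.2 hbc.2)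

theorem exists_eq_add_latticeLength_smul {a b : ℤ × ℤ} (h : 0 < latticeLength a b) :
    ∃ w : ℤ × ℤ, IsCoprime w.1 w.2 ∧ b = a + (latticeLength a b : ℤ) • w := by
  obtain ⟨w₁, w₂, hw, h₁, h₂⟩ := Int.exists_gcd_one h
  refine ⟨(w₁, w₂), Int.isCoprime_iff_gcd_eq_one.2 hw, Prod.ext ?_ ?_⟩
  · simp only [latticeLength, Prod.fst_add, Prod.smul_fst, smul_eq_mul]
    linear_combination h₁
  · simp only [latticeLength, Prod.snd_add, Prod.smul_snd, smul_eq_mul]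
    linear_combination h₂

/-- The lattice points of the edge `[a, b)` of the positively oriented triangle `a b c`, with `a`
included and `b` excluded. The vertex `c` only serves to measure positions along the edge. -/
def halfOpenEdge (a b c : ℤ × ℤ) : Set (ℤ × ℤ) :=
  {z | orient a b z = 0 ∧ 0 ≤ orient a z c ∧ orient a z c < orient a b c}

theorem halfOpenEdge_add_smul {a w c : ℤ × ℤ} {k : ℤ} (hw : IsCoprime w.1 w.2) (hk : 0 < k)
    (h : 0 < orient a (a + k • w) c) :
    halfOpenEdge a (a + k • w) c = (fun j : ℤ => a + j • w) '' Set.Ico 0 k := by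
  have hpos : 0 < orient a (a + w) c := by
    rw [orient_add_smul_middle] at h
    exact (mul_pos_iff_of_pos_left hk).1 h
  ext z
  simp only [halfOpenEdge, orient_add_smul_middle, Set.mem_ofPred_eq, Set.mem_image, Set.mem_Ico]
  constructor
  · rintro ⟨hz, hz₀, hzk⟩
    obtain ⟨j, rfl⟩ := exists_eq_add_smul_of_orient_eq_zero hw
      ((mul_eq_zero_iff_left hk.ne').1 hz)
    rw [orient_add_smul_middle] at hz₀ hzk
    exact ⟨j, ⟨nonneg_of_mul_nonneg_left hz₀ hpos, lt_of_mul_lt_mul_right hzk hpos.le⟩, rfl⟩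
  · rintro ⟨j, ⟨hj₀, hjk⟩, rfl⟩
    rw [orient_add_smul_middle]
    refine ⟨?_, by positivity, by gcongr⟩
    simp only [orient, Prod.fst_add, Prod.snd_add, Prod.smul_fst, Prod.smul_snd, smul_eq_mul]
    ring

theorem ncard_halfOpenEdge {a b c : ℤ × ℤ} (h : 0 < orient a b c) :
    (halfOpenEdge a b c).ncard = latticeLength a b := by
  have hlen := latticeLength_pos h.ne'
  obtain ⟨w, hw, hb⟩ := exists_eq_add_latticeLength_smul hlen
  have hw0 : w ≠ 0 := by
    rintro rfl
    exact not_isCoprime_zero_zero hw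
  have hinj : Function.Injective (fun j : ℤ => a + j • w) :=
    (add_right_injective a).comp (smul_left_injective ℤ hw0)
  generalize latticeLength a b = k at hlen hb
  subst hb
  rw [halfOpenEdge_add_smul hw (by exact_mod_cast hlen) h, Set.ncard_image_of_injective _ hinj,
    ← Finset.coe_Ico, Set.ncard_coe_finset, Int.card_Ico, sub_zero, Int.toNat_natCast]

theorem finite_halfOpenEdge {a b c : ℤ × ℤ} (h : 0 < orient a b c) :
    (halfOpenEdge a b c).Finite :=
  Set.finite_of_ncard_pos (ncard_halfOpenEdge h ▸ latticeLength_pos h.ne')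

/-- The lattice points in the interior of the positively oriented triangle `a b c`. -/
def interiorPoints (a b c : ℤ × ℤ) : Set (ℤ × ℤ) :=
  {z | 0 < orient z b c ∧ 0 < orient a z c ∧ 0 < orient a b z}

/-- The lattice points on the boundary of the positively oriented triangle `a b c`. -/
def boundaryPoints (a b c : ℤ × ℤ) : Set (ℤ × ℤ) :=
  {z | 0 ≤ orient z b c ∧ 0 ≤ orient a z c ∧ 0 ≤ orient a b z} \ interiorPoints a b c

theorem boundaryPoints_eq_union {a b c : ℤ × ℤ} (h : 0 < orient a b c) :
    boundaryPoints a b c = halfOpenEdge a b c ∪ halfOpenEdge b c a ∪ halfOpenEdge c a b := by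
  ext z
  have hsum := orient_add_orient_add_orient a b c z
  simp only [boundaryPoints, interiorPoints, halfOpenEdge, Set.mem_sdiff, Set.mem_union,
    Set.mem_ofPred_eq, orient_rotate z b c, orient_rotate a b c, orient_rotate b c a,
    orient_rotate a b z, orient_rotate z c a, orient_rotate a z c, orient_rotate b c z]
  omega

theorem disjoint_halfOpenEdge {a b c : ℤ × ℤ} :
    Disjoint (halfOpenEdge a b c) (halfOpenEdge b c a) := by
  rw [Set.disjoint_left]
  intro z
  have hsum := orient_add_orient_add_orient a b c z
  simp only [halfOpenEdge, Set.mem_ofPred_eq, orient_rotate z b c, orient_rotate a b c,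
    orient_rotate a b z]
  omega

theorem ncard_boundaryPoints {a b c : ℤ × ℤ} (h : 0 < orient a b c) :
    (boundaryPoints a b c).ncard = latticeLength a b + latticeLength b c + latticeLength c a := by
  have hbca : 0 < orient b c a := (orient_rotate a b c).symm ▸ h
  have hcab : 0 < orient c a b := (orient_rotate b c a).symm ▸ hbca
  have hdisj : Disjoint (halfOpenEdge a b c ∪ halfOpenEdge b c a) (halfOpenEdge c a b) :=
    Set.disjoint_union_left.2 ⟨disjoint_halfOpenEdge.symm, disjoint_halfOpenEdge⟩
  have hfin := (finite_halfOpenEdge h).union (finite_halfOpenEdge hbca)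
  rw [boundaryPoints_eq_union h,
    Set.ncard_union_eq hdisj hfin (finite_halfOpenEdge hcab),
    Set.ncard_union_eq disjoint_halfOpenEdge (finite_halfOpenEdge h) (finite_halfOpenEdge hbca),
    ncard_halfOpenEdge h, ncard_halfOpenEdge hbca, ncard_halfOpenEdge hcab]

theorem finite_boundaryPoints {a b c : ℤ × ℤ} (h : 0 < orient a b c) :
    (boundaryPoints a b c).Finite := by
  refine Set.finite_of_ncard_pos ?_
  have := latticeLength_pos h.ne'
  rw [ncard_boundaryPoints h]
  omega

theorem interiorPoints_subset_halfOpenParallelogram (a b c : ℤ × ℤ) :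
    interiorPoints a b c ⊆ halfOpenParallelogram a b c := by
  rintro z ⟨ha, hb, hc⟩
  have hsum := orient_add_orient_add_orient a b c z
  exact ⟨⟨hb.le, by omega⟩, hc.le, by omega⟩

/-- The diagonal from `b` to `c` cuts the parallelogram into the triangle and its reflection. -/
theorem insert_insert_halfOpenParallelogram {a b c : ℤ × ℤ} (h : 0 < orient a b c) :
    insert b (insert c (halfOpenParallelogram a b c)) =
      boundaryPoints a b c ∪ interiorPoints a b c ∪ (b + c - ·) ⁻¹' interiorPoints a b c := by
  ext z
  have hsum := orient_add_orient_add_orient a b c z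
  have hsum' := orient_add_orient_add_orient a b c (b + c - z)
  have hzb : z = b ↔ orient a z c = orient a b c ∧ orient a b z = 0 :=
    ⟨by rintro rfl; simp, fun hz => eq_of_orient_eq h.ne' hz.1 (by simp [hz.2])⟩
  have hzc : z = c ↔ orient a z c = 0 ∧ orient a b z = orient a b c :=
    ⟨by rintro rfl; simp, fun hz => eq_of_orient_eq h.ne' (by simp [hz.1]) hz.2⟩
  rw [orient_add_sub_middle, orient_add_sub_right] at hsum'
  simp only [boundaryPoints, interiorPoints, halfOpenParallelogram, Set.mem_sdiff, Set.mem_union,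
    Set.mem_insert_iff, Set.mem_preimage, Set.mem_ofPred_eq, hzb, hzc, orient_add_sub_middle,
    orient_add_sub_right]
  omega

theorem disjoint_preimage_interiorPoints (a b c : ℤ × ℤ) :
    Disjoint (boundaryPoints a b c ∪ interiorPoints a b c)
      ((b + c - ·) ⁻¹' interiorPoints a b c) := by
  rw [Set.disjoint_left]
  intro z
  have hsum := orient_add_orient_add_orient a b c z
  have hsum' := orient_add_orient_add_orient a b c (b + c - z)
  rw [orient_add_sub_middle, orient_add_sub_right] at hsum'
  simp only [boundaryPoints, interiorPoints, Set.mem_sdiff, Set.mem_union, Set.mem_preimage,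
    Set.mem_ofPred_eq, orient_add_sub_middle, orient_add_sub_right]
  omega

theorem pick_triangle {a b c : ℤ × ℤ} (h : 0 < orient a b c) :
    orient a b c + 2 = (boundaryPoints a b c).ncard + 2 * (interiorPoints a b c).ncard := by
  have hpar := ncard_halfOpenParallelogram h
  have hfin := finite_halfOpenParallelogram h
  have hI := hfin.subset (interiorPoints_subset_halfOpenParallelogram a b c)
  have hinj : Function.Injective (b + c - · : ℤ × ℤ → ℤ × ℤ) := sub_right_injective
  have hbc : b ≠ c := by
    rintro rfl
    simp at h
  have hbI : b ∉ insert c (halfOpenParallelogram a b c) := by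
    simp [halfOpenParallelogram, hbc]
  have hcI : c ∉ halfOpenParallelogram a b c := by
    simp [halfOpenParallelogram]
  have hdisj : Disjoint (boundaryPoints a b c) (interiorPoints a b c) := Set.disjoint_sdiff_left
  have hcard := congrArg Set.ncard (insert_insert_halfOpenParallelogram h)
  rw [Set.ncard_insert_of_notMem hbI (hfin.insert c), Set.ncard_insert_of_notMem hcI hfin,
    Set.ncard_union_eq (disjoint_preimage_interiorPoints a b c)
      ((finite_boundaryPoints h).union hI) (hI.preimage hinj.injOn),
    Set.ncard_union_eq hdisj (finite_boundaryPoints h) hI,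
    Set.ncard_preimage_of_injective_subset_range hinj
      (fun z _ => ⟨b + c - z, sub_sub_cancel _ z⟩)] at hcard
  omega

theorem orient_toR2 (a b c : ℤ × ℤ) :
    orient (toR2 a) (toR2 b) (toR2 c) = ((orient a b c : ℤ) : ℝ) := by
  simp only [orient, toR2]
  push_cast
  rfl

section ConvexHull

variable {a b c : ℤ × ℤ}

theorem toR2_mem_convexHull_iff (h : 0 < orient a b c) (z : ℤ × ℤ) :
    toR2 z ∈ convexHull ℝ {toR2 a, toR2 b, toR2 c} ↔
      0 ≤ orient z b c ∧ 0 ≤ orient a z c ∧ 0 ≤ orient a b z := by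
  rw [mem_convexHull_iff_orient_nonneg (by rw [orient_toR2]; exact_mod_cast h)]
  simp only [orient_toR2, Int.cast_nonneg_iff]

theorem toR2_mem_interior_convexHull_iff (h : 0 < orient a b c) (z : ℤ × ℤ) :
    toR2 z ∈ interior (convexHull ℝ {toR2 a, toR2 b, toR2 c}) ↔ z ∈ interiorPoints a b c := by
  rw [mem_interior_convexHull_iff_orient_pos (by rw [orient_toR2]; exact_mod_cast h)]
  simp only [orient_toR2, Int.cast_pos, interiorPoints, Set.mem_ofPred_eq]

theorem icount_convexHull (h : 0 < orient a b c) :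
    icount (convexHull ℝ {toR2 a, toR2 b, toR2 c}) = (interiorPoints a b c).ncard :=
  congrArg Set.ncard (Set.ext (toR2_mem_interior_convexHull_iff h))

theorem bcount_convexHull (h : 0 < orient a b c) :
    bcount (convexHull ℝ {toR2 a, toR2 b, toR2 c}) = (boundaryPoints a b c).ncard := by
  have hclosed : IsClosed (convexHull ℝ {toR2 a, toR2 b, toR2 c}) :=
    (Set.toFinite _).isClosed_convexHull ℝ
  refine congrArg Set.ncard (Set.ext fun z => ?_)
  rw [Set.mem_ofPred_eq, hclosed.frontier_eq, Set.mem_sdiff, toR2_mem_convexHull_iff h,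
    toR2_mem_interior_convexHull_iff h]
  rfl

end ConvexHull

theorem IsLatticeTriangle.exists_orient_pos {T : Set (ℝ × ℝ)} (hT : IsLatticeTriangle T) :
    ∃ a b c : ℤ × ℤ, 0 < orient a b c ∧ T = convexHull ℝ {toR2 a, toR2 b, toR2 c} := by
  obtain ⟨a, b, c, hind, rfl⟩ := hT
  rw [affineIndependent_iff_orient_ne_zero, orient_toR2, Int.cast_ne_zero] at hind
  rcases hind.lt_or_gt with hneg | hpos
  · exact ⟨a, c, b, by rw [orient_swap]; omega, by rw [Set.pair_comm]⟩
  · exact ⟨a, b, c, hpos, rfl⟩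

/-- The arithmetic constraints on the lattice lengths `x`, `y`, `z` of the sides of a lattice
triangle whose doubled area is `N`. -/
structure IsSideTriple (N x y z : ℤ) : Prop where
  pos : 0 < x ∧ 0 < y ∧ 0 < z
  mul_dvd : x * y ∣ N ∧ y * z ∣ N ∧ z * x ∣ N
  dvd_of_dvd : ∀ d, (d ∣ x → d ∣ y → d ∣ z) ∧ (d ∣ y → d ∣ z → d ∣ x) ∧ (d ∣ z → d ∣ x → d ∣ y)

namespace IsSideTriple

variable {N x y z : ℤ}

theorem rotate (h : IsSideTriple N x y z) : IsSideTriple N y z x where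
  pos := ⟨h.pos.2.1, h.pos.2.2, h.pos.1⟩
  mul_dvd := ⟨h.mul_dvd.2.1, h.mul_dvd.2.2, h.mul_dvd.1⟩
  dvd_of_dvd d := ⟨(h.dvd_of_dvd d).2.1, (h.dvd_of_dvd d).2.2, (h.dvd_of_dvd d).1⟩

theorem swap (h : IsSideTriple N x y z) : IsSideTriple N y x z where
  pos := ⟨h.pos.2.1, h.pos.1, h.pos.2.2⟩
  mul_dvd := by simpa only [mul_comm, and_comm] using h.mul_dvd
  dvd_of_dvd d :=
    have ⟨hz, hx, hy⟩ := h.dvd_of_dvd d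
    ⟨fun dy dx => hz dx dy, fun dx dz => hy dz dx, fun dz dy => hx dy dz⟩

theorem exists_sorted (h : IsSideTriple N x y z) :
    ∃ x' y' z', IsSideTriple N x' y' z' ∧ x' + y' + z' = x + y + z ∧ z' ≤ y' ∧ y' ≤ x' := by
  wlog hyx : y ≤ x generalizing x y
  · simpa only [add_comm y x] using this h.swap (by omega)
  rcases le_total z y with hzy | hyz
  · exact ⟨x, y, z, h, rfl, hzy, hyx⟩
  rcases le_total z x with hzx | hxz
  · exact ⟨x, z, y, h.rotate.swap.rotate.rotate, by ring, hyz, hzx⟩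
  · exact ⟨z, x, y, h.rotate.rotate, by ring, hyx, hxz⟩

theorem eq_of_mul_eq (h : IsSideTriple N x y z) (hxy : x * y = N) (hyx : y ≤ x) (hzy : z ≤ y)
    (hz : x < y + z) : x = y ∧ y = z := by
  obtain ⟨hx0, hy0, hz0⟩ := h.pos
  have hzx : z ∣ x :=
    Int.dvd_of_mul_dvd_mul_left hy0.ne' (by rw [mul_comm y x, hxy]; exact h.mul_dvd.2.1)
  have hzy' : z ∣ y :=
    Int.dvd_of_mul_dvd_mul_left hx0.ne' (by rw [hxy, mul_comm]; exact h.mul_dvd.2.2)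
  have hxy' : x - y = 0 := Int.eq_zero_of_dvd_of_nonneg_of_lt (by omega) (by omega)
    (dvd_sub hzx hzy')
  obtain rfl : x = y := by omega
  have := Int.le_of_dvd hz0 ((h.dvd_of_dvd x).1 dvd_rfl dvd_rfl)
  exact ⟨rfl, by omega⟩

theorem mul_eq_and_lt_of_sorted {c : ℤ} (hc : 0 ≤ c) (h : IsSideTriple N x y z) (hzy : z ≤ y)
    (hyx : y ≤ x) (hlo : c * (x + y + z - 2) < N)
    (hhi : N < (c + 1) * (x + y + z - 2 - 2 * c)) :
    x * y = N ∧ 2 * (c + 1) < y + z := by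
  obtain ⟨hx0, hy0, hz0⟩ := h.pos
  obtain ⟨m, hm⟩ := h.mul_dvd.1
  have hym : c < y * m := by
    have :=
      calc c * x ≤ c * (x + y + z - 2) := by gcongr; omega
        _ < N := hlo
        _ = y * m * x := by rw [hm]; ring
    exact lt_of_mul_lt_mul_right this hx0.le
  have hx : x < x + y + z - 2 - 2 * c := by
    have :=
      calc (c + 1) * x ≤ y * m * x := by gcongr; omega
        _ = N := by rw [hm]; ring
        _ < (c + 1) * (x + y + z - 2 - 2 * c) := hhi
    exact lt_of_mul_lt_mul_left this (by omega)
  have hm0 : 0 < m := pos_of_mul_pos_right (by omega) hy0.le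
  suffices m = 1 from ⟨by rw [hm, this, mul_one], by omega⟩
  by_contra hm1
  have hlarge : x * y * 2 ≤ N := hm ▸ by gcongr; omega
  have hsmall :=
    calc N < (c + 1) * (x + y + z - 2 - 2 * c) := hhi
      _ ≤ (c + 1) * (x + 2 * y - 2 * (c + 1)) := mul_le_mul_of_nonneg_left (by omega) (by omega)
  have hprod : 0 ≤ (x - (c + 1)) * (2 * y - (c + 1)) := mul_nonneg (by omega) (by omega)
  linarith [sq_nonneg (c + 1)]

theorem mul_sub_le {c : ℤ} (hc : 2 ≤ c) (h : IsSideTriple N x y z)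
    (hlo : c * (x + y + z - 2) < N) : (c + 1) * (x + y + z - 2 - 2 * c) ≤ N := by
  obtain ⟨x, y, z, h, hsum, hzy, hyx⟩ := h.exists_sorted
  rw [← hsum] at hlo ⊢
  by_contra! hhi
  obtain ⟨hxy, hyz⟩ := h.mul_eq_and_lt_of_sorted (by omega) hzy hyx hlo hhi
  have hx : x < 2 * (c + 1) := by
    have hle : (c + 1) * (x + y + z - 2 - 2 * c) ≤ (c + 1) * (x + 2 * y - 2 * (c + 1)) :=
      mul_le_mul_of_nonneg_left (by omega) (by omega)
    have hneg : (x - 2 * (c + 1)) * (y - (c + 1)) < 0 := by linarith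
    have := neg_of_mul_neg_left hneg (by omega)
    omega
  obtain ⟨rfl, rfl⟩ := h.eq_of_mul_eq hxy hyx hzy (by omega)
  have hprod : 0 ≤ (x - (c + 2)) * (2 * c + 1 - x) := mul_nonneg (by omega) (by omega)
  linarith [mul_nonneg (sub_nonneg.2 hc) (sub_nonneg.2 hc)]

end IsSideTriple

theorem isSideTriple_latticeLength {a b c : ℤ × ℤ} (h : 0 < orient a b c) :
    IsSideTriple (orient a b c) (latticeLength a b) (latticeLength b c) (latticeLength c a) := by
  have hbca : 0 < orient b c a := (orient_rotate a b c).symm ▸ h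
  have hcab : 0 < orient c a b := (orient_rotate b c a).symm ▸ hbca
  refine ⟨?_, ⟨?_, ?_, ?_⟩, fun d => ⟨?_, ?_, ?_⟩⟩
  · simp only [Int.natCast_pos]
    exact ⟨latticeLength_pos h.ne', latticeLength_pos hbca.ne', latticeLength_pos hcab.ne'⟩
  · exact latticeLength_mul_latticeLength_dvd_orient a b c
  · exact orient_rotate a b c ▸ latticeLength_mul_latticeLength_dvd_orient b c a
  · exact orient_rotate c a b ▸ latticeLength_mul_latticeLength_dvd_orient c a b
  all_goals exact dvd_latticeLength_trans

theorem IsLatticeTriangle.exists_isSideTriple {T : Set (ℝ × ℝ)} (hT : IsLatticeTriangle T) :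
    ∃ N x y z : ℤ, IsSideTriple N x y z ∧ (bcount T : ℤ) = x + y + z ∧
      N + 2 = bcount T + 2 * icount T := by
  obtain ⟨a, b, c, h, rfl⟩ := hT.exists_orient_pos
  refine ⟨_, _, _, _, isSideTriple_latticeLength h, ?_, ?_⟩
  · rw [bcount_convexHull h, ncard_boundaryPoints h]
    push_cast
    rfl
  · rw [bcount_convexHull h, icount_convexHull h, pick_triangle h]

/-- **Main theorem.** For every integer `c ≥ 2` there is no lattice triangle `T` with
`((c−1)/2)·b(T) − (c−1) < i(T) < (c/2)·b(T) − c(c+2)`. -/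
theorem no_lattice_triangle_in_open_cone (c : ℤ) (hc : 2 ≤ c) :
    ¬ ∃ T : Set (ℝ × ℝ), IsLatticeTriangle T ∧
      ((c : ℝ) - 1) / 2 * (bcount T : ℝ) - ((c : ℝ) - 1) < (icount T : ℝ) ∧
      (icount T : ℝ) < (c : ℝ) / 2 * (bcount T : ℝ) - (c : ℝ) * ((c : ℝ) + 2) := by
  rintro ⟨T, hT, hlo, hhi⟩
  obtain ⟨N, x, y, z, htriple, hb, hpick⟩ := hT.exists_isSideTriple
  have hpick' : (N : ℝ) + 2 = bcount T + 2 * icount T := by exact_mod_cast hpick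
  have hlow : c * (x + y + z - 2) < N := by
    rw [← hb]; rify; linarith
  have hupp : N < (c + 1) * (x + y + z - 2 - 2 * c) := by
    rw [← hb]; rify; linarith
  exact (htriple.mul_sub_le hc hlow).not_gt hupp
end

section
/- For every integer c ≥ 1, the lattice triangle T with vertices (0,0), (2c²+2c, 0), (1, c) satisfies b(T) = 2c² + 2c + 2 and i(T) = c³ − c. In particular, the apex (2c²+2c+2, c³−c) of the closure of the cone σ_c° is realized by a lattice triangle. -/
open MeasureTheory

/-!
By barycentric coordinates, a point lies in the interior of a counterclockwise triangle iff the
three triangles obtained by replacing one vertex by that point all have positive signed area.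
At lattice points the doubled areas are integers, so counting lattice points becomes arithmetic.

For the triangle with vertices `(0, 0)`, `(k * c, 0)` and `(a, c)`, where `a` and `c` are coprime,
the row at height `y`, `0 < y < c`, is an interval of length exactly `k * (c - y)`. Its endpoints
are not integers because `c ∤ a * y`, so the row contains `k * (c - y)` interior lattice points and
no boundary point. Reflecting `y` to `c - y` sums the rows to `k * c * (c - 1) / 2`, and the
boundary points are those on the base together with the top vertex. The required triangle is the
case `a = 1`, `k = 2 * (c + 1)`.
-/

section SignedDoubleArea

variable {R K : Type*}

/-- Twice the signed area of the triangle `u v w`, positive when the vertices are listed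
counterclockwise. Doubling makes it an integer at integer points. -/
def signedDoubleArea [CommRing R] (u v w : R × R) : R :=
  (v.1 - u.1) * (w.2 - u.2) - (v.2 - u.2) * (w.1 - u.1)

lemma signedDoubleArea_toR2 (u v w : ℤ × ℤ) :
    signedDoubleArea (toR2 u) (toR2 v) (toR2 w) = ((signedDoubleArea u v w : ℤ) : ℝ) := by
  simp [signedDoubleArea, toR2]

lemma affineIndependent_of_signedDoubleArea_ne_zero [CommRing R] [NoZeroDivisors R]
    {u v w : R × R} (h : signedDoubleArea u v w ≠ 0) : AffineIndependent R ![u, v, w] := by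
  rw [affineIndependent_iff_of_fintype]
  intro t ht hsum
  rw [Finset.univ.weightedVSub_eq_linear_combination ht] at hsum
  simp only [Fin.sum_univ_three, Prod.ext_iff, Matrix.cons_val, Prod.fst_add, Prod.snd_add,
    Prod.smul_fst, Prod.smul_snd, Prod.fst_zero, Prod.snd_zero, smul_eq_mul] at ht hsum
  obtain ⟨hx, hy⟩ := hsum
  have eq_zero {s : R} (hs : s * signedDoubleArea u v w = 0) : s = 0 :=
    (mul_eq_zero.mp hs).resolve_right h
  unfold signedDoubleArea at eq_zero
  have h₀ : t 0 = 0 := eq_zero <| by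
    linear_combination (v.1 * w.2 - v.2 * w.1) * ht + (v.2 - w.2) * hx + (w.1 - v.1) * hy
  have h₁ : t 1 = 0 := eq_zero <| by
    linear_combination (w.1 * u.2 - w.2 * u.1) * ht + (w.2 - u.2) * hx + (u.1 - w.1) * hy
  have h₂ : t 2 = 0 := eq_zero <| by
    linear_combination (u.1 * v.2 - u.2 * v.1) * ht + (u.2 - v.2) * hx + (v.1 - u.1) * hy
  exact Fin.forall_fin_succ.mpr ⟨h₀, Fin.forall_fin_two.mpr ⟨h₁, h₂⟩⟩

lemma signedDoubleArea_eq_coord_mul [CommRing R] (b : AffineBasis (Fin 3) R (R × R)) (q : R × R) :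
    signedDoubleArea q (b 1) (b 2) = b.coord 0 q * signedDoubleArea (b 0) (b 1) (b 2) ∧
      signedDoubleArea (b 0) q (b 2) = b.coord 1 q * signedDoubleArea (b 0) (b 1) (b 2) ∧
      signedDoubleArea (b 0) (b 1) q = b.coord 2 q * signedDoubleArea (b 0) (b 1) (b 2) := by
  have hsum := b.sum_coord_apply_eq_one q
  have hq := b.linear_combination_coord_eq_self q
  simp only [Fin.sum_univ_three, Prod.ext_iff, Prod.fst_add, Prod.snd_add, Prod.smul_fst,
    Prod.smul_snd, smul_eq_mul] at hsum hq
  obtain ⟨hx, hy⟩ := hq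
  unfold signedDoubleArea
  refine ⟨?_, ?_, ?_⟩
  · linear_combination ((b 1).1 * (b 2).2 - (b 1).2 * (b 2).1) * -hsum
      - ((b 1).2 - (b 2).2) * hx - ((b 2).1 - (b 1).1) * hy
  · linear_combination ((b 2).1 * (b 0).2 - (b 2).2 * (b 0).1) * -hsum
      - ((b 2).2 - (b 0).2) * hx - ((b 0).1 - (b 2).1) * hy
  · linear_combination ((b 0).1 * (b 1).2 - (b 0).2 * (b 1).1) * -hsum
      - ((b 0).2 - (b 1).2) * hx - ((b 1).1 - (b 0).1) * hy

/-- The vertices of a nondegenerate triangle in the plane as an affine basis, whose coordinates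
are the barycentric coordinates of the triangle. -/
def triangleBasis [Field K] (u v w : K × K) (h : signedDoubleArea u v w ≠ 0) :
    AffineBasis (Fin 3) K (K × K) where
  toFun := ![u, v, w]
  ind' := affineIndependent_of_signedDoubleArea_ne_zero h
  tot' := (affineIndependent_of_signedDoubleArea_ne_zero
    h).affineSpan_eq_top_iff_card_eq_finrank_add_one.mpr (by simp)

lemma range_triangleBasis [Field K] {u v w : K × K} (h : signedDoubleArea u v w ≠ 0) :
    Set.range (triangleBasis u v w h) = {u, v, w} := by
  change Set.range ![u, v, w] = _
  rw [Matrix.range_cons, Matrix.range_cons_cons_empty]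
  rfl

lemma signedDoubleArea_eq_coord_triangleBasis_mul [Field K] {u v w : K × K}
    (h : signedDoubleArea u v w ≠ 0) (q : K × K) :
    signedDoubleArea q v w = (triangleBasis u v w h).coord 0 q * signedDoubleArea u v w ∧
      signedDoubleArea u q w = (triangleBasis u v w h).coord 1 q * signedDoubleArea u v w ∧
      signedDoubleArea u v q = (triangleBasis u v w h).coord 2 q * signedDoubleArea u v w :=
  signedDoubleArea_eq_coord_mul (triangleBasis u v w h) q

lemma mem_convexHull_triangle_iff [Field K] [LinearOrder K] [IsStrictOrderedRing K]
    {u v w q : K × K} (h : 0 < signedDoubleArea u v w) :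
    q ∈ convexHull K {u, v, w} ↔
      0 ≤ signedDoubleArea q v w ∧ 0 ≤ signedDoubleArea u q w ∧ 0 ≤ signedDoubleArea u v q := by
  obtain ⟨h₀, h₁, h₂⟩ := signedDoubleArea_eq_coord_triangleBasis_mul h.ne' q
  rw [← range_triangleBasis h.ne', AffineBasis.convexHull_eq_nonneg_coord, Set.mem_ofPred_eq,
    Fin.forall_fin_succ, Fin.forall_fin_two, h₀, h₁, h₂]
  simp only [mul_nonneg_iff_of_pos_right h, Fin.succ_zero_eq_one, Fin.succ_one_eq_two]

lemma mem_interior_convexHull_triangle_iff {u v w q : ℝ × ℝ} (h : 0 < signedDoubleArea u v w) :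
    q ∈ interior (convexHull ℝ {u, v, w}) ↔
      0 < signedDoubleArea q v w ∧ 0 < signedDoubleArea u q w ∧ 0 < signedDoubleArea u v q := by
  obtain ⟨h₀, h₁, h₂⟩ := signedDoubleArea_eq_coord_triangleBasis_mul h.ne' q
  rw [← range_triangleBasis h.ne', AffineBasis.interior_convexHull, Set.mem_ofPred_eq,
    Fin.forall_fin_succ, Fin.forall_fin_two, h₀, h₁, h₂]
  simp only [mul_pos_iff_of_pos_right h, Fin.succ_zero_eq_one, Fin.succ_one_eq_two]

end SignedDoubleArea

section LatticeTriangle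

variable {u v w : ℤ × ℤ}

lemma isLatticeTriangle_convexHull (h : signedDoubleArea u v w ≠ 0) :
    IsLatticeTriangle (convexHull ℝ {toR2 u, toR2 v, toR2 w}) := by
  refine ⟨u, v, w, affineIndependent_of_signedDoubleArea_ne_zero ?_, rfl⟩
  rw [signedDoubleArea_toR2]
  exact_mod_cast h

lemma toR2_mem_convexHull_iff_s7 (h : 0 < signedDoubleArea u v w) (z : ℤ × ℤ) :
    toR2 z ∈ convexHull ℝ {toR2 u, toR2 v, toR2 w} ↔
      0 ≤ signedDoubleArea z v w ∧ 0 ≤ signedDoubleArea u z w ∧ 0 ≤ signedDoubleArea u v z := by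
  rw [mem_convexHull_triangle_iff (by rw [signedDoubleArea_toR2]; exact_mod_cast h)]
  simp only [signedDoubleArea_toR2, Int.cast_nonneg_iff]

lemma toR2_mem_interior_convexHull_iff_s7 (h : 0 < signedDoubleArea u v w) (z : ℤ × ℤ) :
    toR2 z ∈ interior (convexHull ℝ {toR2 u, toR2 v, toR2 w}) ↔
      0 < signedDoubleArea z v w ∧ 0 < signedDoubleArea u z w ∧ 0 < signedDoubleArea u v z := by
  rw [mem_interior_convexHull_triangle_iff (by rw [signedDoubleArea_toR2]; exact_mod_cast h)]
  simp only [signedDoubleArea_toR2, Int.cast_pos]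

end LatticeTriangle

section Counting

open Finset

lemma ncard_setOf_snd_mem_and_fst_mem {α β : Type*} (s : Finset β) (t : β → Finset α) :
    Set.ncard {z : α × β | z.2 ∈ s ∧ z.1 ∈ t z.2} = ∑ y ∈ s, #(t y) := by
  rw [← card_sigma, ← Set.ncard_coe_finset]
  refine Set.ncard_congr (fun z _ ↦ ⟨z.2, z.1⟩) (by simp) ?_ ?_
  · simp +contextual [Prod.ext_iff]
  · rintro ⟨y, x⟩ h
    exact ⟨(x, y), by simpa using h, rfl⟩

lemma not_dvd_mul_of_isCoprime {a c y : ℤ} (hac : IsCoprime a c) (hy : y ∈ Ioo 0 c) :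
    ¬ c ∣ a * y := by
  rw [mem_Ioo] at hy
  exact fun h ↦ hy.2.not_ge (Int.le_of_dvd hy.1 (hac.symm.dvd_of_dvd_mul_left h))

lemma mem_Ioc_ediv_iff_of_not_dvd {n c m x : ℤ} (hc : 0 < c) (hn : ¬ c ∣ n) :
    x ∈ Ioc (n / c) (n / c + m) ↔ n < c * x ∧ c * x < n + m * c := by
  have hne : (x - m) * c ≠ n := fun h ↦ hn ⟨x - m, by rw [← h, mul_comm]⟩
  rw [mem_Ioc, ← sub_le_iff_le_add, Int.ediv_lt_iff_lt_mul hc, Int.le_ediv_iff_mul_le hc,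
    hne.le_iff_lt, mul_comm x c, sub_mul, mul_comm x c, sub_lt_iff_lt_add]

lemma two_mul_sum_Ioo_sub {c : ℤ} (hc : 1 ≤ c) :
    2 * ∑ y ∈ Ioo 0 c, (c - y) = c * (c - 1) := by
  have reflect : ∑ y ∈ Ioo 0 c, (c - y) = ∑ y ∈ Ioo 0 c, y :=
    sum_equiv (Equiv.subLeft c) (by simp [and_comm]) (by simp)
  calc 2 * ∑ y ∈ Ioo 0 c, (c - y) = ∑ y ∈ Ioo 0 c, ((c - y) + y) := by
        rw [sum_add_distrib, ← reflect, two_mul]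
    _ = c * (c - 1) := by
        simp only [sub_add_cancel, sum_const, Int.card_Ioo, sub_zero, nsmul_eq_mul,
          Int.toNat_of_nonneg (sub_nonneg.mpr hc), mul_comm]

end Counting

/-- The triangle with vertices `(0, 0)`, `(k * c, 0)` and `(a, c)`: it has height `c` and a base
whose length is a multiple of the height. -/
def baseTriangle (k a c : ℤ) : Set (ℝ × ℝ) :=
  convexHull ℝ {toR2 (0, 0), toR2 (k * c, 0), toR2 (a, c)}

section BaseTriangle

open Finset

variable {k a c : ℤ}

lemma signedDoubleArea_baseTriangle_pos (hk : 0 < k) (hc : 0 < c) :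
    0 < signedDoubleArea (0, 0) (k * c, 0) (a, c) := by
  have : signedDoubleArea (0, 0) (k * c, 0) (a, c) = k * c * c := by simp [signedDoubleArea]
  rw [this]
  positivity

lemma isLatticeTriangle_baseTriangle (hk : 0 < k) (hc : 0 < c) :
    IsLatticeTriangle (baseTriangle k a c) :=
  isLatticeTriangle_convexHull (signedDoubleArea_baseTriangle_pos hk hc).ne'

lemma signedDoubleArea_replace_left_baseTriangle (z : ℤ × ℤ) :
    signedDoubleArea z (k * c, 0) (a, c) = a * z.2 + k * (c - z.2) * c - c * z.1 := by
  unfold signedDoubleArea; ring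

lemma signedDoubleArea_replace_right_baseTriangle (z : ℤ × ℤ) :
    signedDoubleArea (0, 0) z (a, c) = c * z.1 - a * z.2 := by
  unfold signedDoubleArea; ring

lemma signedDoubleArea_replace_top_baseTriangle (z : ℤ × ℤ) :
    signedDoubleArea (0, 0) (k * c, 0) z = k * c * z.2 := by
  unfold signedDoubleArea; ring

lemma toR2_mem_baseTriangle_iff (hk : 0 < k) (hc : 0 < c) (z : ℤ × ℤ) :
    toR2 z ∈ baseTriangle k a c ↔
      0 ≤ z.2 ∧ a * z.2 ≤ c * z.1 ∧ c * z.1 ≤ a * z.2 + k * (c - z.2) * c := by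
  rw [baseTriangle, toR2_mem_convexHull_iff_s7 (signedDoubleArea_baseTriangle_pos hk hc),
    signedDoubleArea_replace_left_baseTriangle, signedDoubleArea_replace_right_baseTriangle,
    signedDoubleArea_replace_top_baseTriangle, sub_nonneg, sub_nonneg,
    mul_nonneg_iff_of_pos_left (mul_pos hk hc)]
  tauto

lemma toR2_mem_interior_baseTriangle_iff (hk : 0 < k) (hc : 0 < c) (z : ℤ × ℤ) :
    toR2 z ∈ interior (baseTriangle k a c) ↔
      0 < z.2 ∧ a * z.2 < c * z.1 ∧ c * z.1 < a * z.2 + k * (c - z.2) * c := by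
  rw [baseTriangle, toR2_mem_interior_convexHull_iff_s7 (signedDoubleArea_baseTriangle_pos hk hc),
    signedDoubleArea_replace_left_baseTriangle, signedDoubleArea_replace_right_baseTriangle,
    signedDoubleArea_replace_top_baseTriangle, sub_pos, sub_pos,
    mul_pos_iff_of_pos_left (mul_pos hk hc)]
  tauto

lemma toR2_mem_interior_baseTriangle_iff_of_isCoprime (hk : 0 < k) (hc : 0 < c)
    (hac : IsCoprime a c) (z : ℤ × ℤ) :
    toR2 z ∈ interior (baseTriangle k a c) ↔
      z.2 ∈ Ioo 0 c ∧ z.1 ∈ Ioc (a * z.2 / c) (a * z.2 / c + k * (c - z.2)) := by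
  rw [toR2_mem_interior_baseTriangle_iff hk hc]
  constructor
  · rintro ⟨hy, hleft, hright⟩
    have hwidth : 0 < k * c * (c - z.2) := by linarith
    have hyc : z.2 ∈ Ioo 0 c :=
      mem_Ioo.mpr ⟨hy, sub_pos.mp (pos_of_mul_pos_right hwidth (by positivity))⟩
    exact ⟨hyc,
      (mem_Ioc_ediv_iff_of_not_dvd hc (not_dvd_mul_of_isCoprime hac hyc)).mpr ⟨hleft, hright⟩⟩
  · rintro ⟨hy, hx⟩
    exact ⟨(mem_Ioo.mp hy).1,
      (mem_Ioc_ediv_iff_of_not_dvd hc (not_dvd_mul_of_isCoprime hac hy)).mp hx⟩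

lemma two_mul_icount_baseTriangle (hk : 0 < k) (hc : 0 < c) (hac : IsCoprime a c) :
    2 * (icount (baseTriangle k a c) : ℤ) = k * c * (c - 1) := by
  have card_row : ∀ y ∈ Ioo 0 c,
      (#(Ioc (a * y / c) (a * y / c + k * (c - y))) : ℤ) = k * (c - y) := by
    intro y hy
    have : 0 ≤ c - y := sub_nonneg.mpr (mem_Ioo.mp hy).2.le
    rw [Int.card_Ioc, add_sub_cancel_left, Int.toNat_of_nonneg (by positivity)]
  simp only [icount, toR2_mem_interior_baseTriangle_iff_of_isCoprime hk hc hac]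
  rw [ncard_setOf_snd_mem_and_fst_mem (Ioo 0 c)
      (fun y ↦ Ioc (a * y / c) (a * y / c + k * (c - y))), Nat.cast_sum, sum_congr rfl card_row,
    ← mul_sum, mul_left_comm, two_mul_sum_Ioo_sub hc, mul_assoc]

lemma toR2_mem_interior_baseTriangle_of_mem_Ioo (hk : 0 < k) (hc : 0 < c) (hac : IsCoprime a c)
    {z : ℤ × ℤ} (hz : toR2 z ∈ baseTriangle k a c) (hy : z.2 ∈ Ioo 0 c) :
    toR2 z ∈ interior (baseTriangle k a c) := by
  have hndvd : ¬ c ∣ a * z.2 := not_dvd_mul_of_isCoprime hac hy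
  obtain ⟨-, hleft, hright⟩ := (toR2_mem_baseTriangle_iff hk hc z).mp hz
  refine (toR2_mem_interior_baseTriangle_iff hk hc z).mpr ⟨(mem_Ioo.mp hy).1, ?_, ?_⟩
  · exact hleft.lt_of_ne fun h ↦ hndvd ⟨z.1, h⟩
  · exact hright.lt_of_ne fun h ↦ hndvd ⟨z.1 - k * (c - z.2), by linear_combination -h⟩

lemma toR2_mem_frontier_baseTriangle_iff (hk : 0 < k) (hc : 0 < c) (hac : IsCoprime a c)
    (z : ℤ × ℤ) :
    toR2 z ∈ frontier (baseTriangle k a c) ↔ z = (a, c) ∨ z.1 ∈ Icc 0 (k * c) ∧ z.2 = 0 := by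
  have hclosed : IsClosed (baseTriangle k a c) := (Set.toFinite _).isClosed_convexHull ℝ
  rw [hclosed.frontier_eq, Set.mem_sdiff]
  constructor
  · rintro ⟨hz, hnot⟩
    have hrow := mt (toR2_mem_interior_baseTriangle_of_mem_Ioo hk hc hac hz) hnot
    obtain ⟨hy, hleft, hright⟩ := (toR2_mem_baseTriangle_iff hk hc z).mp hz
    have hyc : z.2 ≤ c := by
      have : 0 ≤ k * c * (c - z.2) := by linarith
      exact sub_nonneg.mp (nonneg_of_mul_nonneg_right this (by positivity))
    obtain h | h : z.2 = c ∨ z.2 = 0 := by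
      rw [mem_Ioo] at hrow
      lia
    · rw [h] at hleft hright
      exact .inl (Prod.ext (mul_left_cancel₀ hc.ne' (by linarith)) h)
    · rw [h] at hleft hright
      refine .inr ⟨mem_Icc.mpr ⟨?_, ?_⟩, h⟩ <;> refine le_of_mul_le_mul_left ?_ hc <;> linarith
  · rw [toR2_mem_baseTriangle_iff hk hc, toR2_mem_interior_baseTriangle_iff hk hc]
    rintro (rfl | ⟨hx, hy⟩)
    · exact ⟨⟨hc.le, (mul_comm a c).le, by linarith⟩, fun h ↦ h.2.1.ne (mul_comm a c)⟩
    · rw [mem_Icc] at hx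
      have hleft : 0 ≤ c * z.1 := mul_nonneg hc.le hx.1
      have hright : c * z.1 ≤ c * (k * c) := mul_le_mul_of_nonneg_left hx.2 hc.le
      rw [hy]
      exact ⟨⟨le_rfl, by linarith, by linarith⟩, fun h ↦ h.1.false⟩

lemma bcount_baseTriangle (hk : 0 < k) (hc : 0 < c) (hac : IsCoprime a c) :
    (bcount (baseTriangle k a c) : ℤ) = k * c + 2 := by
  have hset : {z : ℤ × ℤ | toR2 z ∈ frontier (baseTriangle k a c)} =
      (insert (a, c) (Icc 0 (k * c) ×ˢ {0}) : Finset (ℤ × ℤ)) := by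
    ext z
    simp only [Set.mem_ofPred_eq, toR2_mem_frontier_baseTriangle_iff hk hc hac, coe_insert,
      Set.mem_insert_iff, mem_coe, mem_product, mem_singleton]
  have htop : (a, c) ∉ Icc 0 (k * c) ×ˢ ({0} : Finset ℤ) := fun h ↦
    hc.ne' (mem_singleton.mp (mem_product.mp h).2)
  rw [bcount, hset, Set.ncard_coe_finset, card_insert_of_notMem htop, card_product,
    card_singleton, Int.card_Icc]
  have : 0 < k * c := mul_pos hk hc
  lia

end BaseTriangle

/-- For every integer `c ≥ 1`, the lattice triangle with vertices `(0,0)`, `(2c²+2c, 0)`,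
`(1, c)` satisfies `b(T) = 2c²+2c+2` and `i(T) = c³−c`; in particular the apex
`(2c²+2c+2, c³−c)` of the closure of `σ_c°` is realized by a lattice triangle. -/
theorem apex_realized (c : ℤ) (hc : 1 ≤ c) :
    (IsLatticeTriangle (convexHull ℝ {toR2 (0, 0), toR2 (2 * c ^ 2 + 2 * c, 0), toR2 (1, c)}) ∧
      (bcount (convexHull ℝ {toR2 (0, 0), toR2 (2 * c ^ 2 + 2 * c, 0), toR2 (1, c)}) : ℤ) =
        2 * c ^ 2 + 2 * c + 2 ∧
      (icount (convexHull ℝ {toR2 (0, 0), toR2 (2 * c ^ 2 + 2 * c, 0), toR2 (1, c)}) : ℤ) =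
        c ^ 3 - c) ∧
    ∃ T : Set (ℝ × ℝ), IsLatticeTriangle T ∧
      (bcount T : ℤ) = 2 * c ^ 2 + 2 * c + 2 ∧ (icount T : ℤ) = c ^ 3 - c := by
  set T : Set (ℝ × ℝ) :=
    convexHull ℝ {toR2 (0, 0), toR2 (2 * c ^ 2 + 2 * c, 0), toR2 (1, c)} with hT
  have hT_eq : T = baseTriangle (2 * (c + 1)) 1 c := by
    rw [hT, baseTriangle]; ring_nf
  have hc₀ : 0 < c := hc
  have hk : 0 < 2 * (c + 1) := by positivity
  have htriangle : IsLatticeTriangle T := hT_eq ▸ isLatticeTriangle_baseTriangle hk hc₀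
  have hb : (bcount T : ℤ) = 2 * c ^ 2 + 2 * c + 2 := by
    rw [hT_eq, bcount_baseTriangle hk hc₀ isCoprime_one_left]
    ring
  have hi : (icount T : ℤ) = c ^ 3 - c := by
    rw [← mul_right_inj' (two_ne_zero' ℤ), hT_eq,
      two_mul_icount_baseTriangle hk hc₀ isCoprime_one_left]
    ring
  exact ⟨⟨htriangle, hb, hi⟩, T, htriangle, hb, hi⟩
end
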